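/- arXiv:2010.00653 — 2 statements merged into one kernel-verified Lean document; each statement's English description precedes it below -/
import Mathlib

section
/- Let K be an algebraically closed field, let m, n >= 1, and let w in S^{m,n}_infty. Then J_w equals the intersection, over all reduced pipe dreams D in RP(w), of the ideals (u_{ij} : (i,j) in D) of K[u_{ij} : (i,j) in [m] x [n]] generated by the variables indexed by D. -/
namespace Paper

/-!
We model a permutation of the positive integers `{1, 2, 3, ...}` as an `Equiv.Perm ℕ`
that fixes `0`; all notions below refer only to positive inputs.
-/

/-- The rank `r_w(i,j) = #{a ∈ [i] : w(a) ∈ [j]}` of the `i × j` partial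
permutation matrix of `w`, where `[k] = {1, ..., k}`. -/
def rnk (w : Equiv.Perm ℕ) (i j : ℕ) : ℕ :=
  ((Finset.Icc 1 i).filter fun a => w a ∈ Finset.Icc 1 j).card

/-- Right descent set `Des_R(w) = {i ≥ 1 : w(i) > w(i+1)}`. -/
def DesR (w : Equiv.Perm ℕ) : Set ℕ := {i | 1 ≤ i ∧ w (i + 1) < w i}

/-- Left descent set `Des_L(w) = Des_R(w⁻¹)`. -/
def DesL (w : Equiv.Perm ℕ) : Set ℕ := DesR w⁻¹

/-- `S_∞`: permutations of the positive integers fixing all but finitely many points. -/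
def SInfty : Set (Equiv.Perm ℕ) :=
  {w | w 0 = 0 ∧ Set.Finite {i : ℕ | w i ≠ i}}

/-- `S^{m,n}_∞ = {w ∈ S_∞ : Des_R(w) ⊆ [m], Des_L(w) ⊆ [n]}`. -/
def SmnInfty (m n : ℕ) : Set (Equiv.Perm ℕ) :=
  {w | w ∈ SInfty ∧ DesR w ⊆ Set.Icc 1 m ∧ DesL w ⊆ Set.Icc 1 n}

/-- The Rothe diagram `D(w) = {(i,j) : 0 < j < w(i), 0 < i < w⁻¹(j)}`. -/
def Rothe (w : Equiv.Perm ℕ) : Set (ℕ × ℕ) :=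
  {p | 0 < p.2 ∧ p.2 < w p.1 ∧ 0 < p.1 ∧ p.1 < w⁻¹ p.2}

/-- The function `1_FPF`, sending `i ↦ i - (-1)^i` on positive integers (it fixes `0`). -/
def oneFPF : ℕ → ℕ := fun i => if i % 2 = 1 then i + 1 else i - 1

/-- `I^FPF_∞`: fixed-point-free involutions of the positive integers agreeing with
`1_FPF` at all sufficiently large inputs. -/
def IFPFInfty : Set (Equiv.Perm ℕ) :=
  {z | z 0 = 0 ∧ (∀ i, 1 ≤ i → z i ≠ i) ∧ z * z = 1 ∧ ∃ N, ∀ i, N ≤ i → z i = oneFPF i}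

/-- The skew-symmetric Rothe diagram `D^ss(z) = {(i,j) : 0 < j < z(i), j < i < z(j)}`. -/
def Dss (z : Equiv.Perm ℕ) : Set (ℕ × ℕ) :=
  {p | 0 < p.2 ∧ p.2 < z p.1 ∧ p.2 < p.1 ∧ p.1 < z p.2}

/-- `FPF_n(I_n) = {z ∈ I^FPF_∞ : D^ss(z) ⊆ [n] × [n]}`. -/
def FPFIn (n : ℕ) : Set (Equiv.Perm ℕ) :=
  {z | z ∈ IFPFInfty ∧ Dss z ⊆ Set.Icc 1 n ×ˢ Set.Icc 1 n}

/-- `ℓ_fpf(z) = |D^ss(z)|`. -/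
noncomputable def ellFpf (z : Equiv.Perm ℕ) : ℕ := (Dss z).ncard

/-- Bruhat order on `I^FPF_∞`: reflexive-transitive closure of `z < (i,j) z (i,j)`
whenever `i < j` and `ℓ_fpf` goes up by exactly one. -/
def fpfBruhatLe (z y : Equiv.Perm ℕ) : Prop :=
  Relation.ReflTransGen
    (fun a b => ∃ i j : ℕ, 1 ≤ i ∧ i < j ∧
      b = Equiv.swap i j * a * Equiv.swap i j ∧ ellFpf b = ellFpf a + 1) z y

/-- `i` is a visible descent of `z` if `i ≥ 1` and `z(i+1) < min(i, z(i))`. -/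
def visibleDescent (z : Equiv.Perm ℕ) (i : ℕ) : Prop :=
  1 ≤ i ∧ z (i + 1) < min i (z i)

/-- `Ψ(z, p) = {(p,r) z (p,r) : r > p, ℓ_fpf((p,r) z (p,r)) = ℓ_fpf(z) + 1}`. -/
def PsiSet (z : Equiv.Perm ℕ) (p : ℕ) : Set (Equiv.Perm ℕ) :=
  {y | ∃ r : ℕ, p < r ∧ y = Equiv.swap p r * z * Equiv.swap p r ∧ ellFpf y = ellFpf z + 1}

/-- The dominant component `dom(z) = {(i,j) : i, j ≥ 1, r_z(i,j) = 0}`. -/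
def domSet (z : Equiv.Perm ℕ) : Set (ℕ × ℕ) :=
  {p | 1 ≤ p.1 ∧ 1 ≤ p.2 ∧ rnk z p.1 p.2 = 0}

/-- `(p, q)` is an outer corner of `dom(z)`. -/
def IsOuterCorner (z : Equiv.Perm ℕ) (p q : ℕ) : Prop :=
  1 ≤ p ∧ 1 ≤ q ∧ (p, q) ∉ domSet z ∧
    (p = 1 ∨ (p - 1, q) ∈ domSet z) ∧ (q = 1 ∨ (p, q - 1) ∈ domSet z)

/-- `I_n`: involutions in `S_∞` fixing every `i > n`. -/
def InvolIn (n : ℕ) : Set (Equiv.Perm ℕ) :=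
  {w | w 0 = 0 ∧ w * w = 1 ∧ ∀ i, n < i → w i = i}

/-- The fixed points of `z` lying in `[n]`. -/
def fixedPtsIn (n : ℕ) (z : Equiv.Perm ℕ) : Finset ℕ :=
  (Finset.Icc 1 n).filter fun i => z i = i

/-- The function swapping `m + 2t - 1` and `m + 2t` for every `t ≥ 1`, fixing all other points. -/
def tailSwapFun (m : ℕ) : ℕ → ℕ := fun i =>
  if i ≤ m then i else if (i - m) % 2 = 1 then i + 1 else i - 1

theorem tailSwapFun_involutive (m : ℕ) : Function.Involutive (tailSwapFun m) := by
  intro i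
  unfold tailSwapFun
  split_ifs <;> omega

/-- The involution swapping `m + 2t - 1` and `m + 2t` for every `t ≥ 1`. -/
def tailSwap (m : ℕ) : Equiv.Perm ℕ :=
  Function.Involutive.toPerm _ (tailSwapFun_involutive m)

/-- The fixed-point-free standardization `FPF_n(z) = z ⋅ (i_1,n+1)⋯(i_k,n+k) ⋅ c`,
where `i_1 < ⋯ < i_k` are the fixed points of `z` in `[n]` and `c` swaps
`n+k+2t-1, n+k+2t` for all `t ≥ 1`. -/
noncomputable def fpfStd (n : ℕ) (z : Equiv.Perm ℕ) : Equiv.Perm ℕ :=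
  z *
    (List.ofFn fun t : Fin (fixedPtsIn n z).card =>
      Equiv.swap ((fixedPtsIn n z).orderEmbOfFin rfl t) (n + (t : ℕ) + 1)).prod *
    tailSwap (n + (fixedPtsIn n z).card)

/-- `Mat^ss_n(K)`: skew-symmetric `n × n` matrices (transpose is the negative, zero diagonal).
Row/column index `a : Fin n` corresponds to the (1-indexed) row/column `a + 1`. -/
def MatSS (K : Type*) [CommRing K] (n : ℕ) : Set (Matrix (Fin n) (Fin n) K) :=
  {A | A.transpose = -A ∧ ∀ i, A i i = 0}

/-- The skew-symmetric matrix Schubert variety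
`X^ss_z = {A ∈ Mat^ss_n : rank A_{[i][j]} ≤ r_z(i,j) for all i, j ∈ [n]}`. -/
noncomputable def Xss (K : Type*) [Field K] (n : ℕ) (z : Equiv.Perm ℕ) :
    Set (Matrix (Fin n) (Fin n) K) :=
  {A | A ∈ MatSS K n ∧ ∀ (i j : ℕ) (hi : i ≤ n) (hj : j ≤ n), 1 ≤ i → 1 ≤ j →
    (A.submatrix (Fin.castLE hi) (Fin.castLE hj)).rank ≤ rnk z i j}

/-- `#{(i,j) : i > j, j < z(i), i < z(j)}` for a permutation of `Fin N`
(the `0`-indexed version of `ℓ_fpf`). -/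
def ellFpfFin {N : ℕ} (z : Equiv.Perm (Fin N)) : ℕ :=
  (Finset.univ.filter fun p : Fin N × Fin N => p.2 < p.1 ∧ p.2 < z p.1 ∧ p.1 < z p.2).card

/-- The Pfaffian of an `N × N` matrix:
`pf(A) = ∑_{z fpf involution of [N]} (-1)^{ℓ_fpf(z)} ∏_{z(i) < i} A_{z(i), i}`.
(The sum is empty, hence `0`, when `N` is odd.) -/
noncomputable def Pfaffian {R : Type*} [CommRing R] {N : ℕ} (A : Matrix (Fin N) (Fin N) R) : R :=
  ∑ z ∈ Finset.univ.filter (fun z : Equiv.Perm (Fin N) => (∀ i, z i ≠ i) ∧ ∀ i, z (z i) = i),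
    (-1 : R) ^ ellFpfFin z * ∏ i ∈ Finset.univ.filter (fun i : Fin N => z i < i), A (z i) i

/-- Index set for the variables `u_{ij}`, `n ≥ i > j ≥ 1`, of the coordinate ring
`R_n = K[Mat^ss_n]`; the variable `⟨(a, b), _⟩` is `u_{a+1, b+1}`. -/
abbrev SSVar (n : ℕ) : Type := {p : Fin n × Fin n // p.2 < p.1}

/-- The generic skew-symmetric matrix `U^ss` over `R_n`. -/
noncomputable def Uss (K : Type*) [CommRing K] (n : ℕ) :
    Matrix (Fin n) (Fin n) (MvPolynomial (SSVar n) K) :=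
  Matrix.of fun i j =>
    if h : j < i then MvPolynomial.X ⟨(i, j), h⟩
    else if h' : i < j then -MvPolynomial.X ⟨(j, i), h'⟩
    else 0

/-- The ideal of polynomials vanishing on a set `X`, where a point `A` is evaluated
via `ev A : σ → K`. -/
noncomputable def vanishingIdeal {K : Type*} [CommRing K] {σ M : Type*}
    (X : Set M) (ev : M → σ → K) : Ideal (MvPolynomial σ K) where
  carrier := {f | ∀ A ∈ X, MvPolynomial.eval (ev A) f = 0}
  zero_mem' := by simp
  add_mem' := by
    intro f g hf hg
    simp only [Set.mem_setOf_eq] at *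
    intro A hA
    rw [map_add, hf A hA, hg A hA, add_zero]
  smul_mem' := by
    intro c f hf
    simp only [Set.mem_setOf_eq] at *
    intro A hA
    rw [smul_eq_mul, map_mul, hf A hA, mul_zero]

/-- `I(X^ss_z) ⊆ R_n`, where `u_{ij}` is evaluated at `A` as `A_{ij}`. -/
noncomputable def IXss (K : Type*) [Field K] (n : ℕ) (z : Equiv.Perm ℕ) :
    Ideal (MvPolynomial (SSVar n) K) :=
  vanishingIdeal (Xss K n z) fun A v => A v.1.1 v.1.2

/-- `pf(U^ss_{RR})` for a finite row/column set `R` (listed in increasing order). -/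
noncomputable def pfUss (K : Type*) [CommRing K] {n : ℕ} (R : Finset (Fin n)) :
    MvPolynomial (SSVar n) K :=
  Pfaffian ((Uss K n).submatrix (fun s => R.orderEmbOfFin rfl s) fun t => R.orderEmbOfFin rfl t)

/-- The ideal `I^ss_z`, generated by the Pfaffians `pf(U^ss_{RR})` over all nonempty
even-size `R ⊆ [n]` such that `R ⊆ [i]` and `|R ∩ [j]| > r_z(i,j)` for some `i ≥ j`. -/
noncomputable def IssIdeal (K : Type*) [Field K] (n : ℕ) (z : Equiv.Perm ℕ) :
    Ideal (MvPolynomial (SSVar n) K) :=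
  Ideal.span {f : MvPolynomial (SSVar n) K | ∃ R : Finset (Fin n),
    R.Nonempty ∧ Even R.card ∧
    (∃ i j : ℕ, 1 ≤ j ∧ j ≤ i ∧ i ≤ n ∧ (∀ a ∈ R, (a : ℕ) + 1 ≤ i) ∧
      rnk z i j < (R.filter fun a : Fin n => (a : ℕ) + 1 ≤ j).card) ∧
    f = pfUss K R}

/-- The square-free monomial `u^ss_{AB}`: zero if `A ⊙ B` meets the diagonal, and otherwise
the product of the variables `u_{ij}` over the pairs `i > j` with `(i,j)` or `(j,i)` in
`A ⊙ B = {(a_0, b_r), (a_1, b_{r-1}), ..., (a_r, b_0)}`. -/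
noncomputable def ussMon (K : Type*) [CommRing K] {n : ℕ} (A B : Finset (Fin n)) :
    MvPolynomial (SSVar n) K :=
  if h : A.card = B.card then
    if ∃ t : Fin A.card, (A.orderEmbOfFin rfl t : Fin n) = B.orderEmbOfFin h.symm t.rev then 0
    else
      ∏ v ∈ Finset.univ.filter (fun v : SSVar n => ∃ t : Fin A.card,
          (A.orderEmbOfFin rfl t = v.1.1 ∧ B.orderEmbOfFin h.symm t.rev = v.1.2) ∨
          (A.orderEmbOfFin rfl t = v.1.2 ∧ B.orderEmbOfFin h.symm t.rev = v.1.1)),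
        MvPolynomial.X v
  else 0

/-- The monomial ideal `J^ss_r` of a symmetric rank table `r`, generated by the monomials
`u^ss_{AB}` with `A ⊆ [i]`, `B ⊆ [j]`, `|A| = |B| = r(i,j) + 1` for some `n ≥ i ≥ j ≥ 1`. -/
noncomputable def JssIdealOfTable (K : Type*) [CommRing K] (n : ℕ) (r : ℕ → ℕ → ℕ) :
    Ideal (MvPolynomial (SSVar n) K) :=
  Ideal.span {g : MvPolynomial (SSVar n) K | ∃ (i j : ℕ) (A B : Finset (Fin n)),
    1 ≤ j ∧ j ≤ i ∧ i ≤ n ∧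
    (∀ a ∈ A, (a : ℕ) + 1 ≤ i) ∧ (∀ b ∈ B, (b : ℕ) + 1 ≤ j) ∧
    A.card = r i j + 1 ∧ B.card = r i j + 1 ∧ g = ussMon K A B}

/-- `J^ss_z = J^ss_{r_z}`. -/
noncomputable def JssIdeal (K : Type*) [CommRing K] (n : ℕ) (z : Equiv.Perm ℕ) :
    Ideal (MvPolynomial (SSVar n) K) :=
  JssIdealOfTable K n (rnk z)

/-- Total degree of a monomial (exponent vector). -/
def totalDeg {σ : Type*} (m : σ →₀ ℕ) : ℕ := m.sum fun _ e => e

/-- The lexicographic order on the variables `u_{ij}` by the pair `(i, j)`. -/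
def varLT {n : ℕ} (v w : SSVar n) : Prop :=
  v.1.1 < w.1.1 ∨ (v.1.1 = w.1.1 ∧ v.1.2 < w.1.2)

/-- The (graded) reverse lexicographic term order on monomials of `R_n`:
`m₁ < m₂` iff `deg m₁ < deg m₂`, or the degrees agree and the lexicographically largest
variable with different exponents has strictly larger exponent in `m₁`. -/
def revlexLT {n : ℕ} (m₁ m₂ : SSVar n →₀ ℕ) : Prop :=
  totalDeg m₁ < totalDeg m₂ ∨
    (totalDeg m₁ = totalDeg m₂ ∧ ∃ v, m₂ v < m₁ v ∧ ∀ w, varLT v w → m₁ w = m₂ w)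

/-- The initial ideal of `I` with respect to a strict term order `lt`: the ideal
generated by the leading monomials `init(f)` of the nonzero `f ∈ I`. -/
noncomputable def initIdeal {K : Type*} [CommRing K] {σ : Type*}
    (lt : (σ →₀ ℕ) → (σ →₀ ℕ) → Prop) (I : Ideal (MvPolynomial σ K)) :
    Ideal (MvPolynomial σ K) :=
  Ideal.span {g : MvPolynomial σ K | ∃ f ∈ I, f ≠ 0 ∧ ∃ m : σ →₀ ℕ, m ∈ f.support ∧
    (∀ m' ∈ f.support, m' ≠ m → lt m' m) ∧ g = MvPolynomial.monomial m (1 : K)}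

/-- A term order on the monomials of a polynomial ring: a linear order in which `1` is
the unique minimum and multiplication by a fixed monomial preserves order. -/
structure TermOrder (σ : Type*) where
  le : (σ →₀ ℕ) → (σ →₀ ℕ) → Prop
  trans : ∀ a b c, le a b → le b c → le a c
  antisymm : ∀ a b, le a b → le b a → a = b
  total : ∀ a b, le a b ∨ le b a
  zero_le : ∀ a, le 0 a
  add_le_add_right : ∀ a b c, le a b → le (a + c) (b + c)

/-- The initial ideal of `I` with respect to a term order `τ`. -/
noncomputable def initIdealLe {K : Type*} [CommRing K] {σ : Type*}
    (τ : TermOrder σ) (I : Ideal (MvPolynomial σ K)) : Ideal (MvPolynomial σ K) :=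
  Ideal.span {g : MvPolynomial σ K | ∃ f ∈ I, f ≠ 0 ∧ ∃ m : σ →₀ ℕ, m ∈ f.support ∧
    (∀ m' ∈ f.support, τ.le m' m) ∧ g = MvPolynomial.monomial m (1 : K)}

/-- An ideal is homogeneous (w.r.t. total degree) iff it contains all homogeneous
components of its elements. -/
def IsHomogIdeal {K : Type*} [CommSemiring K] {σ : Type*}
    (I : Ideal (MvPolynomial σ K)) : Prop :=
  ∀ f ∈ I, ∀ d : ℕ, MvPolynomial.homogeneousComponent d f ∈ I

/-- The reading order on boxes: rows top to bottom, each row right to left. -/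
def pdRel (p q : ℕ × ℕ) : Prop := p.1 < q.1 ∨ (p.1 = q.1 ∧ q.2 ≤ p.2)

instance : DecidableRel pdRel := fun p q => by unfold pdRel; infer_instance

instance : IsTrans (ℕ × ℕ) pdRel :=
  ⟨fun a b c hab hbc => by unfold pdRel at *; omega⟩

instance : IsAntisymm (ℕ × ℕ) pdRel :=
  ⟨fun a b hab hba => by
    unfold pdRel at hab hba
    exact Prod.ext_iff.mpr ⟨by omega, by omega⟩⟩

instance : IsTotal (ℕ × ℕ) pdRel :=
  ⟨fun a b => by unfold pdRel; omega⟩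

/-- The pipe dream reading word of a finite set `D` of boxes: the letters `i + j - 1`
over `(i, j) ∈ D`, in the order making `(i, -j)` increase lexicographically. -/
def pdWord (D : Finset (ℕ × ℕ)) : List ℕ :=
  (D.sort pdRel).map fun p => p.1 + p.2 - 1

/-- The product `s_{i_1} s_{i_2} ⋯ s_{i_l}` of simple transpositions. -/
def wordProd (l : List ℕ) : Equiv.Perm ℕ :=
  (l.map fun i => Equiv.swap i (i + 1)).prod

/-- `l` is a reduced word for `w`: a minimal-length word of positive letters whose
product of simple transpositions is `w`. -/
def IsReducedWordOf (w : Equiv.Perm ℕ) (l : List ℕ) : Prop :=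
  (∀ a ∈ l, 1 ≤ a) ∧ wordProd l = w ∧
    ∀ l' : List ℕ, (∀ a ∈ l', 1 ≤ a) → wordProd l' = w → l.length ≤ l'.length

/-- The set `RP(w)` of reduced pipe dreams for `w`. -/
def RP (w : Equiv.Perm ℕ) : Set (Finset (ℕ × ℕ)) :=
  {D | (∀ p ∈ D, 1 ≤ p.1 ∧ 1 ≤ p.2) ∧ IsReducedWordOf w (pdWord D)}

/-- `I^FPF_m`: involutions in `S_∞` that are fixed-point-free on `[m]` and fix
all `i > m`. -/
def IFPFm (m : ℕ) : Set (Equiv.Perm ℕ) :=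
  {y | y 0 = 0 ∧ y * y = 1 ∧ (∀ i, 1 ≤ i → i ≤ m → y i ≠ i) ∧ ∀ i, m < i → y i = i}

/-- `z = FPF_m(y)`: `z` agrees with `y` on `[m]` and swaps `m + 2k - 1, m + 2k`
for all `k ≥ 1`. -/
def IsFPFStdOf (m : ℕ) (y z : Equiv.Perm ℕ) : Prop :=
  (∀ i, i ≤ m → z i = y i) ∧
    ∀ k : ℕ, z (m + 2 * k + 1) = m + 2 * k + 2 ∧ z (m + 2 * k + 2) = m + 2 * k + 1

/-- The set `FP(z)` of fpf-involution pipe dreams for `z ∈ I^FPF_∞`. -/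
def FP (z : Equiv.Perm ℕ) : Set (Finset (ℕ × ℕ)) :=
  {E | ∃ (m : ℕ) (y : Equiv.Perm ℕ) (D : Finset (ℕ × ℕ)), Even m ∧ y ∈ IFPFm m ∧
    IsFPFStdOf m y z ∧ D ∈ RP y ∧ D.image Prod.swap = D ∧
    E = D.filter fun p => p.2 < p.1}

/-- The minor `det(U_{AB})` of the generic `m × n` matrix `U`, with rows `A` and
columns `B` listed in increasing order. -/
noncomputable def genMinor (K : Type*) [CommRing K] {m n : ℕ}
    (A : Finset (Fin m)) (B : Finset (Fin n)) (h : A.card = B.card) :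
    MvPolynomial (Fin m × Fin n) K :=
  (Matrix.of fun s t : Fin A.card =>
    (MvPolynomial.X (A.orderEmbOfFin rfl s, B.orderEmbOfFin h.symm t) :
      MvPolynomial (Fin m × Fin n) K)).det

/-- The antidiagonal monomial `u_{AB} = ∏_{(a,b) ∈ A ⊙ B} u_{ab}`. -/
noncomputable def genMon (K : Type*) [CommRing K] {m n : ℕ}
    (A : Finset (Fin m)) (B : Finset (Fin n)) (h : A.card = B.card) :
    MvPolynomial (Fin m × Fin n) K :=
  ∏ t : Fin A.card, MvPolynomial.X (A.orderEmbOfFin rfl t, B.orderEmbOfFin h.symm t.rev)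

/-- The exponent vector of the antidiagonal monomial `u_{AB}`. -/
noncomputable def antidiagExp {m n : ℕ} (A : Finset (Fin m)) (B : Finset (Fin n))
    (h : A.card = B.card) : (Fin m × Fin n) →₀ ℕ :=
  ∑ t : Fin A.card, Finsupp.single (A.orderEmbOfFin rfl t, B.orderEmbOfFin h.symm t.rev) 1

/-- The ideal `I_w`, generated by the minors `det(U_{AB})` with `A ⊆ [i]`, `B ⊆ [j]`,
`|A| = |B| = r_w(i,j) + 1` for some `(i,j) ∈ [m] × [n]`. -/
noncomputable def IwIdeal (K : Type*) [Field K] (m n : ℕ) (w : Equiv.Perm ℕ) :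
    Ideal (MvPolynomial (Fin m × Fin n) K) :=
  Ideal.span {g : MvPolynomial (Fin m × Fin n) K |
    ∃ (i j : ℕ) (A : Finset (Fin m)) (B : Finset (Fin n)) (h : A.card = B.card),
      1 ≤ i ∧ i ≤ m ∧ 1 ≤ j ∧ j ≤ n ∧ (∀ a ∈ A, (a : ℕ) + 1 ≤ i) ∧
      (∀ b ∈ B, (b : ℕ) + 1 ≤ j) ∧ A.card = rnk w i j + 1 ∧ g = genMinor K A B h}

/-- The monomial ideal `J_w`, generated by the monomials `u_{AB}` with `A ⊆ [i]`,
`B ⊆ [j]`, `|A| = |B| = r_w(i,j) + 1` for some `(i,j) ∈ [m] × [n]`. -/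
noncomputable def JwIdeal (K : Type*) [Field K] (m n : ℕ) (w : Equiv.Perm ℕ) :
    Ideal (MvPolynomial (Fin m × Fin n) K) :=
  Ideal.span {g : MvPolynomial (Fin m × Fin n) K |
    ∃ (i j : ℕ) (A : Finset (Fin m)) (B : Finset (Fin n)) (h : A.card = B.card),
      1 ≤ i ∧ i ≤ m ∧ 1 ≤ j ∧ j ≤ n ∧ (∀ a ∈ A, (a : ℕ) + 1 ≤ i) ∧
      (∀ b ∈ B, (b : ℕ) + 1 ≤ j) ∧ A.card = rnk w i j + 1 ∧ g = genMon K A B h}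

/-- The matrix Schubert variety
`X_w = {A ∈ Mat_{m×n} : rank A_{[i][j]} ≤ r_w(i,j) for all (i,j) ∈ [m] × [n]}`. -/
noncomputable def Xw (K : Type*) [Field K] (m n : ℕ) (w : Equiv.Perm ℕ) :
    Set (Matrix (Fin m) (Fin n) K) :=
  {A | ∀ (i j : ℕ) (hi : i ≤ m) (hj : j ≤ n), 1 ≤ i → 1 ≤ j →
    (A.submatrix (Fin.castLE hi) (Fin.castLE hj)).rank ≤ rnk w i j}

/-- `I(X_w)`: the ideal of polynomials vanishing on `X_w`. -/
noncomputable def IXw (K : Type*) [Field K] (m n : ℕ) (w : Equiv.Perm ℕ) :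
    Ideal (MvPolynomial (Fin m × Fin n) K) :=
  vanishingIdeal (Xw K m n w) fun A v => A v.1 v.2

/-- The variable `u_{pq}` (with `1 ≤ q < p ≤ n`) of `R_n`. -/
def ssvar {n : ℕ} (p q : ℕ) (hp : p ≤ n) (hq : 1 ≤ q) (hqp : q < p) : SSVar n :=
  ⟨(⟨p - 1, by omega⟩, ⟨q - 1, by omega⟩), Fin.mk_lt_mk.mpr (by omega)⟩

/-- Index set for the variables `u_{ij}`, `i > j ≥ 1`, over all positive integers. -/
abbrev PVar : Type := {p : ℕ × ℕ // 1 ≤ p.2 ∧ p.2 < p.1}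

/-- The generic skew-symmetric array `U^ss` over the positive integers:
`u_{xy}` if `x > y`, `-u_{yx}` if `x < y`, `0` if `x = y`. -/
noncomputable def UssP (K : Type*) [CommRing K] (x y : ℕ) : MvPolynomial PVar K :=
  if h : 1 ≤ y ∧ y < x then MvPolynomial.X ⟨(x, y), h⟩
  else if h' : 1 ≤ x ∧ x < y then -MvPolynomial.X ⟨(y, x), h'⟩
  else 0

/-- `pf(U^ss_{RR})` for a finite set `R` of positive integers. -/
noncomputable def pfUssP (K : Type*) [CommRing K] (R : Finset ℕ) : MvPolynomial PVar K :=
  Pfaffian (Matrix.of fun s t : Fin R.card =>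
    UssP K (R.orderEmbOfFin rfl s) (R.orderEmbOfFin rfl t))

/-- `g_{AB}`: the Pfaffian of the `(|B|+|A|) × (|B|+|A|)` skew-symmetric matrix whose
rows and columns are labeled by `B` (increasing) followed by `A` (increasing), with
entry `U^ss_{xy}` at a position labeled `(x, y)`, except that the entry is `0` when
both labels come from the `A`-block. -/
noncomputable def gAB (K : Type*) [CommRing K] (A B : Finset ℕ) : MvPolynomial PVar K :=
  Pfaffian ((Matrix.of fun p q : Fin B.card ⊕ Fin A.card =>
      match p, q with
      | Sum.inl s, Sum.inl t => UssP K (B.orderEmbOfFin rfl s) (B.orderEmbOfFin rfl t)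
      | Sum.inl s, Sum.inr t => UssP K (B.orderEmbOfFin rfl s) (A.orderEmbOfFin rfl t)
      | Sum.inr s, Sum.inl t => UssP K (A.orderEmbOfFin rfl s) (B.orderEmbOfFin rfl t)
      | Sum.inr _, Sum.inr _ => (0 : MvPolynomial PVar K)).submatrix
    finSumFinEquiv.symm finSumFinEquiv.symm)

/-- The exponent of the sign `⟨T, S⟩ = (-1)^{|S||T| + C(|S|,2) + ∑ of the (1-indexed)
positions in the increasing enumeration of `T` occupied by elements of `S`}`. -/
def setSgnExp (T S : Finset ℕ) : ℕ :=
  S.card * T.card + Nat.choose S.card 2 +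
    ∑ t : Fin T.card, if T.orderEmbOfFin rfl t ∈ S then (t : ℕ) + 1 else 0


/-- local update at one letter -/
def opL (k : ℕ) (f : ℕ → ℕ) : ℕ → ℕ :=
  fun j => if j = k then max (f (k - 1)) (f (k + 1) - 1) else f j

/-- rank function of the Demazure product of a word -/
def FF (i : ℕ) : List ℕ → ℕ → ℕ
  | [] => fun j => min i j
  | k :: Q => opL k (FF i Q)

theorem opL_same (k : ℕ) (f : ℕ → ℕ) : opL k f k = max (f (k - 1)) (f (k + 1) - 1) := by
  simp [opL]

theorem opL_ne {k j : ℕ} (f : ℕ → ℕ) (h : j ≠ k) : opL k f j = f j := by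
  simp [opL, h]

theorem FF_inv (i : ℕ) (Q : List ℕ) (hQ : ∀ a ∈ Q, 1 ≤ a) :
    FF i Q 0 = 0 ∧ ∀ j, FF i Q j ≤ FF i Q (j + 1) ∧ FF i Q (j + 1) ≤ FF i Q j + 1 ∧ FF i Q j ≤ i := by
  induction Q with
  | nil => simp only [FF]; exact ⟨by omega, fun j => by omega⟩
  | cons k Q ih =>
    have hk : 1 ≤ k := hQ k (by simp)
    obtain ⟨h0, h⟩ := ih (fun a ha => hQ a (by simp [ha]))
    obtain ⟨k', rfl⟩ : ∃ k', k = k' + 1 := ⟨k - 1, by omega⟩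
    simp only [FF]
    refine ⟨by rw [opL_ne _ (by omega)]; exact h0, fun j => ?_⟩
    have h1 := h k'
    have h2 := h (k' + 1)
    have h3 := h j
    have e := opL_same (k' + 1) (FF i Q)
    simp only [Nat.add_sub_cancel] at e
    by_cases c1 : j = k' + 1
    · subst c1
      rw [opL_ne (j := k' + 1 + 1) _ (by omega), e]
      omega
    · rw [opL_ne (j := j) _ c1]
      by_cases c2 : j = k'
      · subst c2
        rw [e]
        omega
      · rw [opL_ne _ (by omega)]
        omega

theorem FF_le_col (i : ℕ) (Q : List ℕ) (hQ : ∀ a ∈ Q, 1 ≤ a) (j d : ℕ) :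
    FF i Q (j + d) ≤ FF i Q j + d := by
  induction d with
  | zero => simp
  | succ d ih =>
    have := ((FF_inv i Q hQ).2 (j + d)).2.1
    rw [← add_assoc]; omega

theorem FF_le_j (i : ℕ) (Q : List ℕ) (hQ : ∀ a ∈ Q, 1 ≤ a) (j : ℕ) : FF i Q j ≤ j := by
  have := FF_le_col i Q hQ 0 j
  rw [(FF_inv i Q hQ).1] at this
  simpa using this

theorem FF_row (i : ℕ) (Q : List ℕ) (j : ℕ) : FF (i + 1) Q j ≤ FF i Q j + 1 := by
  induction Q generalizing j with
  | nil => simp only [FF]; omega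
  | cons k Q ih =>
    simp only [FF]
    by_cases c : j = k
    · subst c
      rw [opL_same, opL_same]
      have := ih (j - 1)
      have := ih (j + 1)
      omega
    · rw [opL_ne _ c, opL_ne _ c]; exact ih j

theorem FF_le_row (i : ℕ) (Q : List ℕ) (j d : ℕ) : FF (i + d) Q j ≤ FF i Q j + d := by
  induction d with
  | zero => simp
  | succ d ih =>
    have := FF_row (i + d) Q j
    rw [← add_assoc]; omega

/-! ranks -/

theorem rnk_succ (w : Equiv.Perm ℕ) (i j : ℕ) :
    rnk w (i + 1) j = rnk w i j + if w (i + 1) ∈ Finset.Icc 1 j then 1 else 0 := by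
  unfold rnk
  rw [← Finset.insert_Icc_right_eq_Icc_add_one (by omega), Finset.filter_insert]
  split_ifs with h
  · rw [Finset.card_insert_of_notMem (by simp)]
  · simp

theorem rnk_inv (w : Equiv.Perm ℕ) (i j : ℕ) : rnk w⁻¹ j i = rnk w i j := by
  unfold rnk
  symm
  apply Finset.card_bij (fun a _ => w a)
  · intro a ha
    simp only [Finset.mem_filter] at ha ⊢
    simpa using ha.symm
  · intro a _ b _ h
    exact w.injective h
  · intro b hb
    refine ⟨w⁻¹ b, ?_, by simp⟩
    simp only [Finset.mem_filter] at hb ⊢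
    simpa using hb.symm

theorem rnk_le_j (w : Equiv.Perm ℕ) (i j : ℕ) : rnk w j i ≤ j := by
  unfold rnk
  exact (Finset.card_filter_le _ _).trans (by simp)

theorem rnk_col (w : Equiv.Perm ℕ) (h0 : w 0 = 0) (i j : ℕ) :
    rnk w i (j + 1) = rnk w i j + if w⁻¹ (j + 1) ≤ i then 1 else 0 := by
  rw [← rnk_inv, rnk_succ, rnk_inv]
  have : 1 ≤ w⁻¹ (j + 1) := by
    by_contra hc
    have h1 : w⁻¹ (j + 1) = 0 := by omega
    rw [Equiv.Perm.inv_eq_iff_eq, h0] at h1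
    omega
  simp only [Finset.mem_Icc, this, true_and]

theorem rnk_swap (w : Equiv.Perm ℕ) {k j : ℕ} (hk : 1 ≤ k) (i : ℕ) (hj : j ≠ k) :
    rnk (Equiv.swap k (k + 1) * w) i j = rnk w i j := by
  unfold rnk
  congr 1
  apply Finset.filter_congr
  intro a _
  simp only [Equiv.Perm.mul_apply, Finset.mem_Icc]
  rw [Equiv.swap_apply_def]
  split_ifs <;> omega

theorem FF_le_rnk (l : List ℕ) (hl : ∀ a ∈ l, 1 ≤ a) :
    wordProd l 0 = 0 ∧ ∀ i j, FF i l j ≤ rnk (wordProd l) i j := by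
  induction l with
  | nil =>
    refine ⟨rfl, fun i j => ?_⟩
    simp only [FF]
    have : wordProd [] = 1 := rfl
    rw [this]
    unfold rnk
    have : (Finset.Icc 1 (min i j)) ⊆ (Finset.Icc 1 i).filter fun a => (1 : Equiv.Perm ℕ) a ∈ Finset.Icc 1 j := by
      intro a ha
      simp only [Finset.mem_Icc, Finset.mem_filter, Equiv.Perm.one_apply] at ha ⊢
      omega
    simpa using Finset.card_le_card this
  | cons k Q ih =>
    have hk : 1 ≤ k := hl k (by simp)
    obtain ⟨h0, h⟩ := ih (fun a ha => hl a (by simp [ha]))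
    have e : wordProd (k :: Q) = Equiv.swap k (k + 1) * wordProd Q := by simp [wordProd]
    have h0' : wordProd (k :: Q) 0 = 0 := by
      rw [e, Equiv.Perm.mul_apply, h0, Equiv.swap_apply_of_ne_of_ne] <;> omega
    refine ⟨h0', fun i j => ?_⟩
    simp only [FF]
    by_cases c : j = k
    · subst c
      rw [opL_same]
      obtain ⟨k', rfl⟩ : ∃ k', j = k' + 1 := ⟨j - 1, by omega⟩
      have a1 := rnk_col _ h0' i k'
      have a2 := rnk_col _ h0' i (k' + 1)
      have b1 := h i k'
      have b2 := h i (k' + 1 + 1)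
      rw [← rnk_swap (wordProd Q) hk i (by omega), ← e] at b1
      rw [← rnk_swap (wordProd Q) hk i (by omega), ← e] at b2
      simp only [Nat.add_sub_cancel]
      split_ifs at a1 a2 <;> omega
    · rw [opL_ne _ c, e, rnk_swap _ hk _ c]
      exact h i j

theorem wordProd_cons (k : ℕ) (Q : List ℕ) :
    wordProd (k :: Q) = Equiv.swap k (k + 1) * wordProd Q := by simp [wordProd]

theorem exchange (l : List ℕ) (hl : ∀ a ∈ l, 1 ≤ a) (p q : ℕ) (hpq : p < q)
    (h : (wordProd l)⁻¹ q < (wordProd l)⁻¹ p) :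
    ∃ l' : List ℕ, (∀ a ∈ l', 1 ≤ a) ∧ l'.length + 1 = l.length ∧
      wordProd l' = Equiv.swap p q * wordProd l := by
  induction l generalizing p q with
  | nil => simp [wordProd] at h; omega
  | cons a l ih =>
    have hl' : ∀ a ∈ l, 1 ≤ a := fun b hb => hl b (by simp [hb])
    by_cases c : p = a ∧ q = a + 1
    · obtain ⟨rfl, rfl⟩ := c
      refine ⟨l, hl', rfl, ?_⟩
      rw [wordProd_cons, ← mul_assoc, Equiv.swap_mul_self, one_mul]
    · have hlt : Equiv.swap a (a + 1) p < Equiv.swap a (a + 1) q := by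
        rw [Equiv.swap_apply_def, Equiv.swap_apply_def]
        split_ifs <;> omega
      rw [wordProd_cons, mul_inv_rev, Equiv.swap_inv, Equiv.Perm.mul_apply,
        Equiv.Perm.mul_apply] at h
      obtain ⟨l1, h1, h2, h3⟩ := ih hl' _ _ hlt h
      refine ⟨a :: l1, ?_, by simp [h2], ?_⟩
      · intro b hb
        rcases List.mem_cons.1 hb with rfl | hb
        · exact hl _ (by simp)
        · exact h1 _ hb
      · rw [wordProd_cons, wordProd_cons, h3, ← mul_assoc, ← mul_assoc,
          Equiv.mul_swap_eq_swap_mul, Equiv.swap_apply_self, Equiv.swap_apply_self]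

theorem eq_one_of_rnk (w : Equiv.Perm ℕ) (h0 : w 0 = 0)
    (h : ∀ i, i ≤ rnk w i i) : w = 1 := by
  have hle : ∀ i, w i ≤ i := by
    intro i
    rcases Nat.eq_zero_or_pos i with rfl | hi
    · omega
    have h1 := h i
    unfold rnk at h1
    have h2 : (Finset.Icc 1 i).filter (fun a => w a ∈ Finset.Icc 1 i) = Finset.Icc 1 i :=
      Finset.eq_of_subset_of_card_le (Finset.filter_subset _ _) (by simpa using h1)
    have h3 : i ∈ (Finset.Icc 1 i).filter (fun a => w a ∈ Finset.Icc 1 i) := by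
      rw [h2]; simp; omega
    simp at h3
    omega
  ext i
  simp only [Equiv.Perm.one_apply]
  induction i using Nat.strong_induction_on with
  | _ i ih =>
    by_contra hc
    have := hle i
    have h1 := ih (w i) (by omega)
    exact hc (w.injective h1)

theorem exists_reduced (Q : List ℕ) (hQ : ∀ a ∈ Q, 1 ≤ a) (w : Equiv.Perm ℕ) (h0 : w 0 = 0)
    (h : ∀ i j, FF i Q j ≤ rnk w i j) :
    ∃ l : List ℕ, l.Sublist Q ∧ IsReducedWordOf w l := by
  induction Q generalizing w with
  | nil =>
    refine ⟨[], List.Sublist.refl _, by simp, ?_, by simp⟩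
    rw [eq_one_of_rnk w h0 (fun i => by simpa [FF] using h i i)]
    rfl
  | cons k Q ih =>
    have hk : 1 ≤ k := hQ k (by simp)
    have hQ' : ∀ a ∈ Q, 1 ≤ a := fun a ha => hQ a (by simp [ha])
    obtain ⟨k', rfl⟩ : ∃ k', k = k' + 1 := ⟨k - 1, by omega⟩
    have hh : ∀ i j, j ≠ k' + 1 → FF i Q j ≤ rnk w i j := by
      intro i j hj
      have := h i j
      simp only [FF] at this
      rwa [opL_ne _ hj] at this
    by_cases c : w⁻¹ (k' + 1 + 1) < w⁻¹ (k' + 1)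
    · set w' := Equiv.swap (k' + 1) (k' + 1 + 1) * w with hw'
      have h0' : w' 0 = 0 := by
        rw [hw', Equiv.Perm.mul_apply, h0, Equiv.swap_apply_of_ne_of_ne] <;> omega
      have hinv : w'⁻¹ (k' + 1) = w⁻¹ (k' + 1 + 1) := by
        rw [hw', mul_inv_rev, Equiv.swap_inv, Equiv.Perm.mul_apply, Equiv.swap_apply_left]
      have hr : ∀ i j, FF i Q j ≤ rnk w' i j := by
        intro i j
        by_cases hj : j = k' + 1
        · subst hj
          have a0 := rnk_col w' h0' i k'
          have a1 := rnk_col w h0 i k'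
          have a2 := rnk_col w h0 i (k' + 1)
          have e := rnk_swap w hk i (j := k') (by omega)
          rw [← hw'] at e
          rw [hinv] at a0
          have b1 := hh i k' (by omega)
          have b2 := hh i (k' + 1 + 1) (by omega)
          have i1 := (FF_inv i Q hQ').2 k'
          have i2 := (FF_inv i Q hQ').2 (k' + 1)
          split_ifs at a0 a1 a2 <;> omega
        · rw [hw', rnk_swap _ hk _ hj]; exact hh i j hj
      obtain ⟨l, hl, h1, h2, h3⟩ := ih hQ' w' h0' hr
      refine ⟨(k' + 1) :: l, hl.cons_cons _, ?_, ?_, ?_⟩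
      · intro b hb
        rcases List.mem_cons.1 hb with rfl | hb
        · exact hk
        · exact h1 _ hb
      · rw [wordProd_cons, h2, hw', ← mul_assoc, Equiv.swap_mul_self, one_mul]
      · intro l2 p1 p2
        obtain ⟨l3, q1, q2, q3⟩ := exchange l2 p1 (k' + 1) (k' + 1 + 1) (by omega) (by rwa [p2])
        have := h3 l3 q1 (by rw [q3, p2])
        simp only [List.length_cons]
        omega
    · have hr : ∀ i j, FF i Q j ≤ rnk w i j := by
        intro i j
        by_cases hj : j = k' + 1
        · subst hj
          have a1 := rnk_col w h0 i k'
          have a2 := rnk_col w h0 i (k' + 1)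
          have b1 := hh i k' (by omega)
          have b2 := hh i (k' + 1 + 1) (by omega)
          have i1 := (FF_inv i Q hQ').2 k'
          have i2 := (FF_inv i Q hQ').2 (k' + 1)
          split_ifs at a1 a2 <;> omega
        · exact hh i j hj
      obtain ⟨l, hl, h1⟩ := ih hQ' w h0 hr
      exact ⟨l, hl.cons _, h1⟩

/-! extension of the rank conditions -/

theorem rnk_ext (w : Equiv.Perm ℕ) (h0 : w 0 = 0) (m : ℕ) (hm : ∀ i, m < i → w i < w (i + 1))
    (j d : ℕ) : j ≤ rnk w (m + d) j ∨ rnk w m j + d ≤ rnk w (m + d) j := by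
  induction d with
  | zero => right; simp
  | succ d ih =>
    have hs := rnk_succ w (m + d) j
    rw [← add_assoc]
    by_cases c : w (m + d + 1) ≤ j
    · have : 1 ≤ w (m + d + 1) := by
        by_contra hc
        have h1 : w (m + d + 1) = w 0 := by omega
        have := w.injective h1
        omega
      rw [if_pos (by simp; omega)] at hs
      omega
    · left
      have hgt : ∀ t, j < w (m + d + 1 + t) := by
        intro t
        induction t with
        | zero => simpa using c
        | succ t iht =>
          have := hm (m + d + 1 + t) (by omega)
          rw [← add_assoc]; omega
      have : Finset.Icc 1 j ⊆ ((Finset.Icc 1 (m + d)).filter fun a => w a ∈ Finset.Icc 1 j).image w := by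
        intro b hb
        refine Finset.mem_image.2 ⟨w⁻¹ b, ?_, by simp⟩
        have hb' := Finset.mem_Icc.1 hb
        simp only [Finset.mem_filter, Finset.mem_Icc]
        refine ⟨⟨?_, ?_⟩, by simpa using hb'⟩
        · by_contra hc
          have h1 : w⁻¹ b = 0 := by omega
          rw [Equiv.Perm.inv_eq_iff_eq, h0] at h1
          omega
        · by_contra hc
          have h1 := hgt (w⁻¹ b - (m + d + 1))
          rw [show m + d + 1 + (w⁻¹ b - (m + d + 1)) = w⁻¹ b by omega] at h1
          simp at h1
          omega
      have h2 := Finset.card_le_card this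
      have h3 := h2.trans Finset.card_image_le
      have h4 : j ≤ rnk w (m + d) j := by simpa [rnk] using h3
      omega

theorem FF_ext (m n : ℕ) (w : Equiv.Perm ℕ) (hw : w ∈ SmnInfty m n)
    (Q : List ℕ) (hQ : ∀ a ∈ Q, 1 ≤ a)
    (h : ∀ i j, 1 ≤ i → i ≤ m → 1 ≤ j → j ≤ n → FF i Q j ≤ rnk w i j) (i j : ℕ) :
    FF i Q j ≤ rnk w i j := by
  obtain ⟨⟨h0, -⟩, hR, hL⟩ := hw
  have h0' : w⁻¹ 0 = 0 := by rw [Equiv.Perm.inv_eq_iff_eq, h0]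
  have mono : ∀ (v : Equiv.Perm ℕ) (m : ℕ), DesR v ⊆ Set.Icc 1 m → ∀ i, m < i → v i < v (i + 1) := by
    intro v m hv i hi
    by_contra hc
    have hne : v i ≠ v (i + 1) := fun e => by have := v.injective e; omega
    have := (hv (show i ∈ DesR v from ⟨by omega, by omega⟩)).2
    omega
  have hA : ∀ i j, i ≤ m → j ≤ n → FF i Q j ≤ rnk w i j := by
    intro i j hi hj
    rcases Nat.eq_zero_or_pos i with rfl | hi'
    · have := ((FF_inv 0 Q hQ).2 j).2.2; omega
    rcases Nat.eq_zero_or_pos j with rfl | hj'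
    · have := (FF_inv i Q hQ).1; omega
    exact h i j hi' hi hj' hj
  have hB : ∀ i j, j ≤ n → FF i Q j ≤ rnk w i j := by
    intro i j hj
    by_cases hi : i ≤ m
    · exact hA i j hi hj
    obtain ⟨d, rfl⟩ : ∃ d, i = m + d := ⟨i - m, by omega⟩
    have h1 := rnk_ext w h0 m (mono w m hR) j d
    have h2 := hA m j le_rfl hj
    have h3 := FF_le_row m Q j d
    have h4 := FF_le_j (m + d) Q hQ j
    omega
  by_cases hj : j ≤ n
  · exact hB i j hj
  obtain ⟨d, rfl⟩ : ∃ d, j = n + d := ⟨j - n, by omega⟩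
  have h1 := rnk_ext w⁻¹ h0' n (mono w⁻¹ n hL) i d
  rw [rnk_inv, rnk_inv] at h1
  have h2 := hB i n le_rfl
  have h3 := FF_le_col i Q hQ n d
  have h4 := ((FF_inv i Q hQ).2 (n + d)).2.2
  omega

/-! antidiagonals -/

/-- maximal antidiagonal avoiding `H` in rows `a, ..., a+d-1` and columns `1, ..., j` -/
def NN (H : Finset (ℕ × ℕ)) : ℕ → ℕ → ℕ → ℕ
  | _, 0, _ => 0
  | _, _ + 1, 0 => 0
  | a, d + 1, j + 1 =>
    if (a, j + 1) ∈ H then max (NN H a (d + 1) j) (NN H (a + 1) d (j + 1))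
    else NN H (a + 1) d j + 1
termination_by _ d j => (d, j)

/-- there is an antidiagonal of size `s` -/
def Ch (H : Finset (ℕ × ℕ)) (a d j s : ℕ) : Prop :=
  ∃ α β : ℕ → ℕ, (∀ t < s, a ≤ α t ∧ α t < a + d ∧ 1 ≤ β t ∧ β t ≤ j ∧ (α t, β t) ∉ H) ∧
    ∀ t t', t < t' → t' < s → α t < α t' ∧ β t' < β t

theorem Ch_of_le (H : Finset (ℕ × ℕ)) (a d j s : ℕ) (h : s ≤ NN H a d j) : Ch H a d j s := by
  induction a, d, j using NN.induct H generalizing s with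
  | case1 a j =>
    rw [NN] at h
    exact ⟨id, id, fun t ht => by omega, fun t t' _ ht => by omega⟩
  | case2 a d =>
    rw [NN] at h
    exact ⟨id, id, fun t ht => by omega, fun t t' _ ht => by omega⟩
  | case3 a d j hH ih1 ih2 =>
    rw [NN, if_pos hH] at h
    rcases le_max_iff.1 h with h | h
    · obtain ⟨α, β, h1, h2⟩ := ih1 s h
      refine ⟨α, β, fun t ht => ?_, h2⟩
      obtain ⟨q1, q2, q3, q4, q5⟩ := h1 t ht
      exact ⟨q1, q2, q3, by omega, q5⟩
    · obtain ⟨α, β, h1, h2⟩ := ih2 s h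
      refine ⟨α, β, fun t ht => ?_, h2⟩
      obtain ⟨q1, q2, q3, q4, q5⟩ := h1 t ht
      exact ⟨by omega, by omega, q3, by omega, q5⟩
  | case4 a d j hH ih =>
    rw [NN, if_neg hH] at h
    rcases s with _ | s
    · exact ⟨id, id, fun t ht => by omega, fun t t' _ ht => by omega⟩
    obtain ⟨α, β, h1, h2⟩ := ih s (by omega)
    refine ⟨fun t => if t = 0 then a else α (t - 1), fun t => if t = 0 then j + 1 else β (t - 1),
      fun t ht => ?_, fun t t' htt ht => ?_⟩
    · by_cases c : t = 0
      · subst c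
        simp only [if_true]
        exact ⟨by omega, by omega, by omega, by omega, hH⟩
      · simp only [if_neg c]
        obtain ⟨q1, q2, q3, q4, q5⟩ := h1 (t - 1) (by omega)
        exact ⟨by omega, by omega, q3, by omega, q5⟩
    · simp only [if_neg (show t' ≠ 0 by omega)]
      obtain ⟨q1, q2, q3, q4, q5⟩ := h1 (t' - 1) (by omega)
      by_cases c : t = 0
      · subst c
        simp only [if_true]
        omega
      · simp only [if_neg c]
        exact h2 _ _ (by omega) (by omega)

theorem le_of_Ch (H : Finset (ℕ × ℕ)) (a d j s : ℕ) (h : Ch H a d j s) : s ≤ NN H a d j := by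
  induction a, d, j using NN.induct H generalizing s with
  | case1 a j =>
    obtain ⟨α, β, h1, h2⟩ := h
    by_contra hc
    have := h1 0 (by omega)
    omega
  | case2 a d =>
    obtain ⟨α, β, h1, h2⟩ := h
    by_contra hc
    have := h1 0 (by omega)
    omega
  | case3 a d j hH ih1 ih2 =>
    rw [NN, if_pos hH]
    rcases s with _ | s
    · omega
    obtain ⟨α, β, h1, h2⟩ := h
    by_cases c : β 0 ≤ j
    · refine le_max_of_le_left (ih1 _ ⟨α, β, fun t ht => ?_, h2⟩)
      obtain ⟨q1, q2, q3, q4, q5⟩ := h1 t ht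
      refine ⟨q1, q2, q3, ?_, q5⟩
      by_cases c' : t = 0
      · subst c'; exact c
      · have := h2 0 t (by omega) ht
        omega
    · refine le_max_of_le_right (ih2 _ ⟨α, β, fun t ht => ?_, h2⟩)
      obtain ⟨q1, q2, q3, q4, q5⟩ := h1 t ht
      obtain ⟨p1, p2, p3, p4, p5⟩ := h1 0 (by omega)
      have hne : α 0 ≠ a := by
        intro e
        rw [e, show β 0 = j + 1 by omega] at p5
        exact p5 hH
      refine ⟨?_, by omega, q3, q4, q5⟩
      by_cases c' : t = 0
      · subst c'; omega
      · have := h2 0 t (by omega) ht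
        omega
  | case4 a d j hH ih =>
    rw [NN, if_neg hH]
    rcases s with _ | s
    · omega
    obtain ⟨α, β, h1, h2⟩ := h
    have := ih s ⟨fun t => α (t + 1), fun t => β (t + 1), fun t ht => ?_,
      fun t t' h ht => h2 _ _ (by omega) (by omega)⟩
    · omega
    · obtain ⟨q1, q2, q3, q4, q5⟩ := h1 (t + 1) (by omega)
      have p := h1 0 (by omega)
      have := h2 0 (t + 1) (by omega) (by omega)
      beta_reduce
      exact ⟨by omega, by omega, q3, by omega, q5⟩

/-! reading words row by row -/

/-- boxes of `H` in row `a`, columns `b, ..., 1` -/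
def rowL (H : Finset (ℕ × ℕ)) (a : ℕ) : ℕ → List (ℕ × ℕ)
  | 0 => []
  | b + 1 => if (a, b + 1) ∈ H then (a, b + 1) :: rowL H a b else rowL H a b

/-- boxes of `H` in rows `a, ..., a+d-1`, columns `≤ B` -/
def rowsL (H : Finset (ℕ × ℕ)) (B : ℕ) : ℕ → ℕ → List (ℕ × ℕ)
  | _, 0 => []
  | a, d + 1 => rowL H a B ++ rowsL H B (a + 1) d

theorem mem_rowL (H : Finset (ℕ × ℕ)) (a b : ℕ) (p : ℕ × ℕ) :
    p ∈ rowL H a b ↔ p ∈ H ∧ p.1 = a ∧ 1 ≤ p.2 ∧ p.2 ≤ b := by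
  obtain ⟨x, y⟩ := p
  induction b with
  | zero => simp [rowL]; omega
  | succ b ih =>
    have : (x, y) = (a, b + 1) ↔ x = a ∧ y = b + 1 := Prod.mk_inj
    rw [rowL]
    split_ifs with h
    · rw [List.mem_cons, ih, this]
      constructor
      · rintro (⟨rfl, rfl⟩ | h')
        · exact ⟨h, rfl, by simp⟩
        · exact ⟨h'.1, h'.2.1, h'.2.2.1, by simp at *; omega⟩
      · rintro ⟨q1, q2, q3, q4⟩
        simp only at *
        by_cases c : y = b + 1
        · exact Or.inl ⟨q2, c⟩
        · exact Or.inr ⟨q1, q2, q3, by omega⟩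
    · rw [ih]
      constructor
      · intro h'
        exact ⟨h'.1, h'.2.1, h'.2.2.1, by simp at *; omega⟩
      · rintro ⟨q1, q2, q3, q4⟩
        simp only at *
        refine ⟨q1, q2, q3, ?_⟩
        by_contra c
        rw [q2, show y = b + 1 by omega] at q1
        exact h q1

theorem mem_rowsL (H : Finset (ℕ × ℕ)) (B a d : ℕ) (p : ℕ × ℕ) :
    p ∈ rowsL H B a d ↔ p ∈ H ∧ a ≤ p.1 ∧ p.1 < a + d ∧ 1 ≤ p.2 ∧ p.2 ≤ B := by
  induction d generalizing a with
  | zero => simp [rowsL]; omega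
  | succ d ih =>
    rw [rowsL, List.mem_append, mem_rowL, ih]
    by_cases c : p ∈ H
    · simp only [c, true_and]
      omega
    · simp [c]

theorem rowL_sorted (H : Finset (ℕ × ℕ)) (a b : ℕ) :
    (rowL H a b).Pairwise pdRel ∧ (rowL H a b).Nodup := by
  induction b with
  | zero => simp [rowL]
  | succ b ih =>
    rw [rowL]
    split_ifs with h
    · refine ⟨List.pairwise_cons.2 ⟨fun q hq => ?_, ih.1⟩, List.nodup_cons.2 ⟨fun hq => ?_, ih.2⟩⟩
      · rw [mem_rowL] at hq
        right
        simp only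
        omega
      · rw [mem_rowL] at hq
        simp only at hq
        omega
    · exact ih

theorem rowsL_sorted (H : Finset (ℕ × ℕ)) (B a d : ℕ) :
    (rowsL H B a d).Pairwise pdRel ∧ (rowsL H B a d).Nodup := by
  induction d generalizing a with
  | zero => simp [rowsL]
  | succ d ih =>
    rw [rowsL]
    refine ⟨List.pairwise_append.2 ⟨(rowL_sorted H a B).1, (ih _).1, fun p hp q hq => ?_⟩,
      List.nodup_append.2 ⟨(rowL_sorted H a B).2, (ih _).2, fun p hp q hq e => ?_⟩⟩
    · rw [mem_rowL] at hp
      rw [mem_rowsL] at hq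
      left; omega
    · subst e
      rw [mem_rowL] at hp
      rw [mem_rowsL] at hq
      omega

/-- letter of a box -/
def letr (p : ℕ × ℕ) : ℕ := p.1 + p.2 - 1

theorem FF_big (i : ℕ) (Q : List ℕ) (hQ : ∀ a ∈ Q, i < a) (j : ℕ) : FF i Q j = min i j := by
  induction Q generalizing j with
  | nil => rfl
  | cons k Q ih =>
    have hk := hQ k (by simp)
    have ih' := ih (fun a ha => hQ a (by simp [ha]))
    simp only [FF]
    by_cases c : j = k
    · subst c
      rw [opL_same, ih', ih']
      omega
    · rw [opL_ne _ c, ih']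

theorem FF_rowL (H : Finset (ℕ × ℕ)) (i a d b : ℕ) (Q : List ℕ)
    (h1 : ∀ j, FF i Q (a + 1 + j) = a + 1 + NN H (a + 2) d j) (h2 : ∀ j ≤ a + 1, FF i Q j = j) :
    (∀ j ≤ b, FF i ((rowL H (a + 1) b).map letr ++ Q) (a + j) = a + NN H (a + 1) (d + 1) j) ∧
    (∀ x, a + b < x → FF i ((rowL H (a + 1) b).map letr ++ Q) x = FF i Q x) ∧
    (∀ j ≤ a, FF i ((rowL H (a + 1) b).map letr ++ Q) j = j) := by
  induction b with
  | zero =>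
    simp only [rowL, List.map_nil, List.nil_append]
    refine ⟨fun j hj => ?_, fun x _ => by trivial, fun j hj => h2 j (by omega)⟩
    obtain rfl : j = 0 := by omega
    rw [h2 _ (by omega), NN]
  | succ b ih =>
    obtain ⟨i1, i2, i3⟩ := ih
    rw [rowL]
    split_ifs with hH
    · have hl : letr (a + 1, b + 1) = a + b + 1 := by simp [letr]; omega
      simp only [List.map_cons, List.cons_append, FF, hl]
      refine ⟨fun j hj => ?_, fun x hx => ?_, fun j hj => ?_⟩
      · by_cases c : j = b + 1
        · subst c
          rw [← add_assoc, opL_same, NN, if_pos hH, i2 (a + b + 1 + 1) (by omega),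
            show a + b + 1 + 1 = a + 1 + (b + 1) by omega, h1, Nat.add_sub_cancel, i1 b le_rfl]
          simp only [add_assoc, Nat.reduceAdd]
          omega
        · rw [opL_ne _ (by omega)]
          exact i1 j (by omega)
      · rw [opL_ne _ (by omega)]
        exact i2 x (by omega)
      · rw [opL_ne _ (by omega)]
        exact i3 j hj
    · refine ⟨fun j hj => ?_, fun x hx => i2 x (by omega), i3⟩
      by_cases c : j = b + 1
      · subst c
        rw [i2 _ (by omega), NN, if_neg hH, show a + (b + 1) = a + 1 + b by omega, h1]
        simp only [add_assoc, Nat.reduceAdd]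
        omega
      · exact i1 j (by omega)

theorem FF_rowsL (H : Finset (ℕ × ℕ)) (B : ℕ) (hB : ∀ p ∈ H, p.2 ≤ B) (e d a : ℕ) :
    (∀ j, FF (a + d) ((rowsL H B (a + 1) (d + e)).map letr) (a + j) = a + NN H (a + 1) d j) ∧
    (∀ j ≤ a, FF (a + d) ((rowsL H B (a + 1) (d + e)).map letr) j = j) := by
  induction d generalizing a with
  | zero =>
    have : ∀ j, FF (a + 0) ((rowsL H B (a + 1) (0 + e)).map letr) j = min a j := by
      intro j
      apply FF_big
      intro k hk
      obtain ⟨p, hp, rfl⟩ := List.mem_map.1 hk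
      rw [mem_rowsL] at hp
      unfold letr
      omega
    refine ⟨fun j => ?_, fun j hj => ?_⟩
    · rw [this, NN]; omega
    · rw [this]; omega
  | succ d ih =>
    obtain ⟨i1, i2⟩ := ih (a + 1)
    have hr : rowsL H B (a + 1) (d + 1 + e) = rowL H (a + 1) B ++ rowsL H B (a + 1 + 1) (d + e) := by
      rw [show d + 1 + e = (d + e) + 1 by omega, rowsL]
    rw [show a + 1 + d = a + (d + 1) by omega] at i1 i2
    obtain ⟨q1, q2, q3⟩ := FF_rowL H (a + (d + 1)) a d B _ i1 i2
    rw [hr, List.map_append]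
    refine ⟨fun j => ?_, q3⟩
    by_cases c : j ≤ B
    · exact q1 j c
    · obtain ⟨j', rfl⟩ : ∃ j', j = j' + 1 := ⟨j - 1, by omega⟩
      rw [q2 _ (by omega), NN, if_neg (fun h => c (hB _ h)),
        show a + (j' + 1) = a + 1 + j' by omega, i1]
      omega

theorem pdWord_of_sorted (L : List (ℕ × ℕ)) (h : L.Pairwise pdRel) (hn : L.Nodup) :
    pdWord L.toFinset = L.map letr := by
  unfold pdWord
  rw [(List.toFinset_sort pdRel hn).2 h]
  rfl

theorem FF_pdWord (H : Finset (ℕ × ℕ)) (hH : ∀ p ∈ H, 1 ≤ p.1 ∧ 1 ≤ p.2) (i j : ℕ) :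
    FF i (pdWord H) j = NN H 1 i j := by
  obtain ⟨A, hA⟩ : ∃ A, ∀ p ∈ H, p.1 ≤ A := ⟨H.sup Prod.fst, fun p hp => Finset.le_sup hp⟩
  obtain ⟨B, hB⟩ : ∃ B, ∀ p ∈ H, p.2 ≤ B := ⟨H.sup Prod.snd, fun p hp => Finset.le_sup hp⟩
  have h1 : (rowsL H B (0 + 1) (i + A)).toFinset = H := by
    ext p
    rw [List.mem_toFinset, mem_rowsL]
    refine ⟨fun h => h.1, fun h => ⟨h, ?_⟩⟩
    have := hA p h
    have := hB p h
    have := hH p h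
    omega
  have h2 := pdWord_of_sorted _ (rowsL_sorted H B (0 + 1) (i + A)).1 (rowsL_sorted H B (0 + 1) (i + A)).2
  rw [h1] at h2
  have h3 := (FF_rowsL H B hB A i 0).1 j
  rw [← h2] at h3
  simpa using h3

theorem pdWord_pos (H : Finset (ℕ × ℕ)) (hH : ∀ p ∈ H, 1 ≤ p.1 ∧ 1 ≤ p.2) :
    ∀ a ∈ pdWord H, 1 ≤ a := by
  intro a ha
  obtain ⟨p, hp, rfl⟩ := List.mem_map.1 ha
  have := hH p ((Finset.mem_sort _).1 hp)
  omega

/-- combinatorial core, easy direction -/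
theorem core1 (w : Equiv.Perm ℕ) (D : Finset (ℕ × ℕ)) (hD : D ∈ RP w) (i j : ℕ) :
    ¬ Ch D 1 i j (rnk w i j + 1) := by
  intro hc
  have h1 := le_of_Ch _ _ _ _ _ hc
  rw [← FF_pdWord D hD.1] at h1
  have h2 := (FF_le_rnk (pdWord D) hD.2.1).2 i j
  rw [hD.2.2.1] at h2
  omega

/-- combinatorial core, hard direction -/
theorem core2 (m n : ℕ) (w : Equiv.Perm ℕ) (hw : w ∈ SmnInfty m n) (H : Finset (ℕ × ℕ))
    (hH : ∀ p ∈ H, 1 ≤ p.1 ∧ 1 ≤ p.2)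
    (h : ∀ i j, 1 ≤ i → i ≤ m → 1 ≤ j → j ≤ n → ¬ Ch H 1 i j (rnk w i j + 1)) :
    ∃ D ∈ RP w, D ⊆ H := by
  have h1 : ∀ i j, FF i (pdWord H) j ≤ rnk w i j := by
    apply FF_ext m n w hw _ (pdWord_pos H hH)
    intro i j a1 a2 a3 a4
    by_contra hc
    apply h i j a1 a2 a3 a4
    apply Ch_of_le
    rw [← FF_pdWord H hH]
    omega
  obtain ⟨l, hl, hr⟩ := exists_reduced _ (pdWord_pos H hH) w hw.1.1 h1
  obtain ⟨L, hL, rfl⟩ := List.sublist_map_iff.1 hl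
  have hs : L.Pairwise pdRel := (Finset.pairwise_sort H pdRel).sublist hL
  have hn : L.Nodup := (Finset.sort_nodup H pdRel).sublist hL
  have hsub : L.toFinset ⊆ H := by
    intro p hp
    exact (Finset.mem_sort _).1 (hL.subset (List.mem_toFinset.1 hp))
  refine ⟨L.toFinset, ⟨fun p hp => hH p (hsub hp), ?_⟩, hsub⟩
  rw [pdWord_of_sorted L hs hn]
  exact hr

theorem chA {m n : ℕ} (H : Finset (ℕ × ℕ)) (A : Finset (Fin m)) (B : Finset (Fin n))
    (h : A.card = B.card) (i j : ℕ) (hA : ∀ a ∈ A, (a : ℕ) + 1 ≤ i) (hB : ∀ b ∈ B, (b : ℕ) + 1 ≤ j)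
    (hH : ∀ t : Fin A.card, (((A.orderEmbOfFin rfl t : Fin m) : ℕ) + 1,
      ((B.orderEmbOfFin h.symm t.rev : Fin n) : ℕ) + 1) ∉ H) :
    Ch H 1 i j A.card := by
  refine ⟨fun t => if ht : t < A.card then ((A.orderEmbOfFin rfl ⟨t, ht⟩ : Fin m) : ℕ) + 1 else 0,
    fun t => if ht : t < A.card then ((B.orderEmbOfFin h.symm (Fin.rev ⟨t, ht⟩) : Fin n) : ℕ) + 1
      else 0, fun t ht => ?_, fun t t' htt ht => ?_⟩
  · simp only [ht, dif_pos]
    have h1 := hA _ (A.orderEmbOfFin_mem rfl ⟨t, ht⟩)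
    have h2 := hB _ (B.orderEmbOfFin_mem h.symm (Fin.rev ⟨t, ht⟩))
    exact ⟨by omega, by omega, by omega, h2, hH ⟨t, ht⟩⟩
  · simp only [ht, dif_pos, htt.trans ht]
    have h1 : A.orderEmbOfFin rfl ⟨t, htt.trans ht⟩ < A.orderEmbOfFin rfl ⟨t', ht⟩ :=
      (A.orderEmbOfFin rfl).strictMono (Fin.mk_lt_mk.2 htt)
    have h2 : B.orderEmbOfFin h.symm (Fin.rev ⟨t', ht⟩) <
        B.orderEmbOfFin h.symm (Fin.rev ⟨t, htt.trans ht⟩) :=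
      (B.orderEmbOfFin h.symm).strictMono (Fin.rev_lt_rev.2 (Fin.mk_lt_mk.2 htt))
    rw [Fin.lt_def] at h1 h2
    omega

theorem chB {m n : ℕ} (H : Finset (ℕ × ℕ)) (i j s : ℕ) (hi : i ≤ m) (hj : j ≤ n)
    (hc : Ch H 1 i j s) :
    ∃ (A : Finset (Fin m)) (B : Finset (Fin n)) (h : A.card = B.card),
      (∀ a ∈ A, (a : ℕ) + 1 ≤ i) ∧ (∀ b ∈ B, (b : ℕ) + 1 ≤ j) ∧ A.card = s ∧
      ∀ t : Fin A.card, (((A.orderEmbOfFin rfl t : Fin m) : ℕ) + 1,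
      ((B.orderEmbOfFin h.symm t.rev : Fin n) : ℕ) + 1) ∉ H := by
  obtain ⟨α, β, h1, h2⟩ := hc
  let fa : Fin s → Fin m := fun t => ⟨α t - 1, by have := h1 t t.2; omega⟩
  let fb : Fin s → Fin n := fun t => ⟨β t.rev - 1, by have := h1 t.rev t.rev.2; omega⟩
  have ma : StrictMono fa := by
    intro t t' htt
    have := h2 t t' htt t'.2
    have := h1 t t.2
    simp only [fa, Fin.mk_lt_mk]
    omega
  have mb : StrictMono fb := by
    intro t t' htt
    have := h2 t'.rev t.rev (Fin.rev_lt_rev.2 htt) t.rev.2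
    have := h1 t.rev t.rev.2
    simp only [fb, Fin.mk_lt_mk]
    omega
  have cA : (Finset.univ.image fa).card = s := by
    rw [Finset.card_image_of_injective _ ma.injective]; simp
  have cB : (Finset.univ.image fb).card = s := by
    rw [Finset.card_image_of_injective _ mb.injective]; simp
  have eA := Finset.orderEmbOfFin_unique cA (fun x => Finset.mem_image_of_mem fa (Finset.mem_univ x)) ma
  have eB := Finset.orderEmbOfFin_unique cB (fun x => Finset.mem_image_of_mem fb (Finset.mem_univ x)) mb
  have key : ∀ t : Fin s, ((((Finset.univ.image fa).orderEmbOfFin cA t : Fin m) : ℕ) + 1,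
      (((Finset.univ.image fb).orderEmbOfFin cB t.rev : Fin n) : ℕ) + 1) ∉ H := by
    intro t
    rw [← eA, ← eB]
    have := h1 t t.2
    have e1 : (fa t : ℕ) + 1 = α t := by simp only [fa]; omega
    have e2 : (fb t.rev : ℕ) + 1 = β t := by simp only [fb, Fin.rev_rev]; omega
    rw [e1, e2]
    exact this.2.2.2.2
  have bA : ∀ a ∈ Finset.univ.image fa, (a : ℕ) + 1 ≤ i := by
    intro a ha
    obtain ⟨t, -, rfl⟩ := Finset.mem_image.1 ha
    have := h1 t t.2
    simp only [fa]; omega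
  have bB : ∀ b ∈ Finset.univ.image fb, (b : ℕ) + 1 ≤ j := by
    intro a ha
    obtain ⟨t, -, rfl⟩ := Finset.mem_image.1 ha
    have := h1 t.rev t.rev.2
    simp only [fb]; omega
  generalize Finset.univ.image fa = A at *
  generalize Finset.univ.image fb = B at *
  clear eA eB ma mb h2
  clear fb fa
  subst cA
  exact ⟨A, B, cB.symm, bA, bB, rfl, key⟩

theorem genMon_eq (K : Type*) [CommRing K] {m n : ℕ}
    (A : Finset (Fin m)) (B : Finset (Fin n)) (h : A.card = B.card) :
    genMon K A B h = MvPolynomial.monomial (antidiagExp A B h) (1 : K) := by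
  unfold genMon antidiagExp
  rw [MvPolynomial.monomial_sum_one]
  rfl

theorem antidiagExp_le {m n : ℕ} (A : Finset (Fin m)) (B : Finset (Fin n)) (h : A.card = B.card)
    (μ : (Fin m × Fin n) →₀ ℕ) :
    antidiagExp A B h ≤ μ ↔
      ∀ t : Fin A.card, μ (A.orderEmbOfFin rfl t, B.orderEmbOfFin h.symm t.rev) ≠ 0 := by
  have hv : ∀ v, antidiagExp A B h v = ∑ t : Fin A.card,
      if (A.orderEmbOfFin rfl t, B.orderEmbOfFin h.symm t.rev) = v then 1 else 0 := by
    intro v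
    unfold antidiagExp
    rw [Finsupp.finset_sum_apply]
    exact Finset.sum_congr rfl fun t _ => by rw [Finsupp.single_apply]
  constructor
  · intro hle t
    have h1 := hle (A.orderEmbOfFin rfl t, B.orderEmbOfFin h.symm t.rev)
    rw [hv] at h1
    have h2 := Finset.single_le_sum (f := fun t' : Fin A.card =>
      if (A.orderEmbOfFin rfl t', B.orderEmbOfFin h.symm t'.rev) =
        (A.orderEmbOfFin rfl t, B.orderEmbOfFin h.symm t.rev) then 1 else 0)
      (fun _ _ => Nat.zero_le _) (Finset.mem_univ t)
    simp only [if_true] at h2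
    omega
  · intro hne v
    rw [hv]
    by_cases c : ∃ t : Fin A.card, (A.orderEmbOfFin rfl t, B.orderEmbOfFin h.symm t.rev) = v
    · obtain ⟨t, rfl⟩ := c
      rw [Finset.sum_eq_single t]
      · have := hne t
        simp only [if_true]
        omega
      · intro t' _ ht
        rw [if_neg]
        intro e
        exact ht ((A.orderEmbOfFin rfl).injective (Prod.mk_inj.1 e).1)
      · simp
    · rw [Finset.sum_eq_zero]
      · omega
      · intro t _
        rw [if_neg fun e => c ⟨t, e⟩]

/-- For `w ∈ S^{m,n}_∞`, the monomial ideal `J_w` equals the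
intersection, over all reduced pipe dreams `D ∈ RP(w)`, of the ideals
`(u_{ij} : (i,j) ∈ D)`. -/
theorem statement18 (K : Type*) [Field K] [IsAlgClosed K] (m n : ℕ)
    (hm : 1 ≤ m) (hn : 1 ≤ n) (w : Equiv.Perm ℕ) (hw : w ∈ SmnInfty m n) :
    JwIdeal K m n w = ⨅ D ∈ RP w,
      Ideal.span {g : MvPolynomial (Fin m × Fin n) K |
        ∃ v : Fin m × Fin n, ((v.1 : ℕ) + 1, (v.2 : ℕ) + 1) ∈ D ∧
          g = MvPolynomial.X v} := by
  have hJ : JwIdeal K m n w = Ideal.span ((fun s => MvPolynomial.monomial s (1 : K)) ''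
      {e | ∃ (i j : ℕ) (A : Finset (Fin m)) (B : Finset (Fin n)) (h : A.card = B.card),
      1 ≤ i ∧ i ≤ m ∧ 1 ≤ j ∧ j ≤ n ∧ (∀ a ∈ A, (a : ℕ) + 1 ≤ i) ∧
      (∀ b ∈ B, (b : ℕ) + 1 ≤ j) ∧ A.card = rnk w i j + 1 ∧ e = antidiagExp A B h}) := by
    unfold JwIdeal
    congr 1
    ext g
    constructor
    · rintro ⟨i, j, A, B, h, h1, h2, h3, h4, h5, h6, h7, rfl⟩
      exact ⟨_, ⟨i, j, A, B, h, h1, h2, h3, h4, h5, h6, h7, rfl⟩, (genMon_eq K A B h).symm⟩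
    · rintro ⟨_, ⟨i, j, A, B, h, h1, h2, h3, h4, h5, h6, h7, rfl⟩, rfl⟩
      exact ⟨i, j, A, B, h, h1, h2, h3, h4, h5, h6, h7, (genMon_eq K A B h).symm⟩
  have hX : ∀ D : Finset (ℕ × ℕ), {g : MvPolynomial (Fin m × Fin n) K |
        ∃ v : Fin m × Fin n, ((v.1 : ℕ) + 1, (v.2 : ℕ) + 1) ∈ D ∧
          g = MvPolynomial.X v} = MvPolynomial.X ''
          {v : Fin m × Fin n | ((v.1 : ℕ) + 1, (v.2 : ℕ) + 1) ∈ D} := by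
    intro D
    ext g
    constructor
    · rintro ⟨v, hv, rfl⟩
      exact ⟨v, hv, rfl⟩
    · rintro ⟨v, hv, rfl⟩
      exact ⟨v, hv, rfl⟩
  rw [hJ]
  ext p
  simp only [hX, Submodule.mem_iInf]
  rw [MvPolynomial.mem_ideal_span_monomial_image]
  simp only [MvPolynomial.mem_ideal_span_X_image]
  constructor
  · intro hp D hD μ hμ
    obtain ⟨_, ⟨i, j, A, B, h, h1, h2, h3, h4, h5, h6, h7, rfl⟩, hle⟩ := hp μ hμ
    rw [antidiagExp_le] at hle
    by_contra hc
    push Not at hc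
    apply core1 w D hD i j
    rw [← h7]
    apply chA D A B h i j h5 h6
    intro t ht
    exact hle t (hc _ ht)
  · intro hp μ hμ
    by_contra hc
    let H : Finset (ℕ × ℕ) := (Finset.univ.filter fun v : Fin m × Fin n => μ v = 0).image
      fun v => ((v.1 : ℕ) + 1, (v.2 : ℕ) + 1)
    have hH : ∀ v : Fin m × Fin n, ((v.1 : ℕ) + 1, (v.2 : ℕ) + 1) ∈ H ↔ μ v = 0 := by
      intro v
      simp only [H, Finset.mem_image, Finset.mem_filter, Finset.mem_univ, true_and]
      constructor
      · rintro ⟨v', hv', e⟩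
        obtain ⟨e1, e2⟩ := Prod.mk_inj.1 e
        have : v' = v := Prod.ext (Fin.ext (by omega)) (Fin.ext (by omega))
        rwa [← this]
      · intro hv
        exact ⟨v, hv, rfl⟩
    obtain ⟨D, hD, hDH⟩ := core2 m n w hw H (by
        intro q hq
        obtain ⟨v, -, rfl⟩ := Finset.mem_image.1 hq
        simp) (by
        intro i j h1 h2 h3 h4 hch
        obtain ⟨A, B, h, h5, h6, h7, h8⟩ := chB (m := m) (n := n) H i j _ h2 h4 hch
        refine hc ⟨_, ⟨i, j, A, B, h, h1, h2, h3, h4, h5, h6, h7, rfl⟩, ?_⟩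
        rw [antidiagExp_le]
        intro t ht
        exact h8 t ((hH (_, _)).2 ht))
    obtain ⟨v, hv, hne⟩ := hp D hD μ hμ
    exact hne ((hH v).1 (hDH hv))

end Paper
end

section
/- Let A and B be finite sets of positive integers with |A| <= |B|, and work over the polynomial ring K[u_{ij} : i > j >= 1] over a field K. Let g_{AB} be the Pfaffian of the (|B|+|A|) x (|B|+|A|) skew-symmetric matrix whose rows and columns are indexed by the elements of B in increasing order followed by the elements of A in increasing order, with entry U^ss_{xy} at a position labeled (x,y) except that the entry is 0 whenever both labels come from the A-block. Then g_{AB} = sum, over all subsets S of A \ B such that |B| + |S| and |A| - |S| are both even, of (-1)^{(|A|-|S|)/2} * <A,S> * <B union S, S> * pf(U^ss_{A\S, A\S}) * pf(U^ss_{B union S, B union S}), where for a finite set T = {t_1 < ... < t_m} and S subset of T, <T,S> := (-1)^{|S|*|T| + |S|(|S|-1)/2 + (sum of the indices i in [m] with t_i in S)}. (The omitted terms, with |B|+|S| even but |A|-|S| odd, vanish because the Pfaffian of an odd-size matrix is 0.) -/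
namespace Paper

section Helpers

variable {R : Type*} [CommRing R] {ι : Type*} [Fintype ι] [DecidableEq ι]

def sE (R : Type*) [CommRing R] (P : Prop) [Decidable P] : R := if P then -1 else 1

lemma sE_mul_self (P : Prop) [Decidable P] : sE R P * sE R P = 1 := by
  unfold sE; split_ifs <;> simp

lemma prod_sE {α : Type*} (s : Finset α) (P : α → Prop) [DecidablePred P] :
    ∏ x ∈ s, sE R (P x) = (-1) ^ (s.filter P).card := by
  unfold sE
  rw [Finset.prod_ite]; simp

def dP (p : ι → ℕ) (z : ι → ι) (x y : ι) : Prop :=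
  p y < p x ∧ p y < p (z x) ∧ p x < p (z y)

instance (p : ι → ℕ) (z : ι → ι) (x y : ι) : Decidable (dP p z x y) := by
  unfold dP; infer_instance

def FI (T : Finset ι) : Finset (ι → ι) :=
  Finset.univ.filter fun z => (∀ i, z (z i) = i) ∧ ∀ i, z i ≠ i ↔ i ∈ T

def tm (T : Finset ι) (p : ι → ℕ) (f : ι → ι → R) (z : ι → ι) : R :=
  (∏ x ∈ T, ∏ y ∈ T, sE R (dP p z x y)) * ∏ i ∈ T, if p (z i) < p i then f (z i) i else 1

def PFT (T : Finset ι) (p : ι → ℕ) (f : ι → ι → R) : R := ∑ z ∈ FI T, tm T p f z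

lemma FI_mem {T : Finset ι} {z : ι → ι} (hz : z ∈ FI T) {i : ι} (hi : i ∈ T) : z i ∈ T := by
  simp only [FI, Finset.mem_filter, Finset.mem_univ, true_and] at hz
  rw [← hz.2, hz.1]
  exact ((hz.2 i).2 hi).symm

end Helpers
section Helpers2

variable {R : Type*} [CommRing R] {ι : Type*} [Fintype ι] [DecidableEq ι]

lemma FI_inv {T : Finset ι} {z : ι → ι} (hz : z ∈ FI T) (i : ι) : z (z i) = i := by
  simp only [FI, Finset.mem_filter, Finset.mem_univ, true_and] at hz
  exact hz.1 i

lemma FI_ne {T : Finset ι} {z : ι → ι} (hz : z ∈ FI T) {i : ι} (hi : i ∈ T) : z i ≠ i := by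
  simp only [FI, Finset.mem_filter, Finset.mem_univ, true_and] at hz
  exact (hz.2 i).2 hi

lemma FI_fix {T : Finset ι} {z : ι → ι} (hz : z ∈ FI T) {i : ι} (hi : i ∉ T) : z i = i := by
  simp only [FI, Finset.mem_filter, Finset.mem_univ, true_and] at hz
  by_contra h
  exact hi ((hz.2 i).1 h)

def St (T : Finset ι) (z : ι → ι) : Prop := (∀ i, z (z i) = i) ∧ ∀ i ∈ T, z i ∈ T ∧ z i ≠ i

lemma FI_St {T : Finset ι} {z : ι → ι} (hz : z ∈ FI T) : St T z :=
  ⟨FI_inv hz, fun _ hi => ⟨FI_mem hz hi, FI_ne hz hi⟩⟩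

lemma halve {T : Finset ι} {z : ι → ι} (hz : St T z) {p : ι → ℕ}
    (hp : ∀ x ∈ T, ∀ y ∈ T, p x = p y → x = y) {M : Type*} [CommMonoid M] (h : ι → M) :
    ∏ x ∈ T, h x = ∏ x ∈ T.filter (fun x => p x < p (z x)), h x * h (z x) := by
  rw [Finset.prod_mul_distrib, ← Finset.prod_filter_mul_prod_filter_not T (fun x => p x < p (z x))]
  congr 1
  refine Finset.prod_nbij' z z ?_ ?_ ?_ ?_ ?_
  · intro x hx
    simp only [Finset.mem_filter] at hx ⊢
    refine ⟨(hz.2 _ hx.1).1, ?_⟩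
    rw [hz.1]
    have := (hz.2 _ hx.1).2
    have h2 : p x ≠ p (z x) := fun h => this (hp _ hx.1 _ ((hz.2 _ hx.1).1) h).symm
    omega
  · intro x hx
    simp only [Finset.mem_filter] at hx ⊢
    refine ⟨(hz.2 _ hx.1).1, ?_⟩
    rw [hz.1]
    omega
  · intro x _; exact hz.1 x
  · intro x _; exact hz.1 x
  · intro x _; simp [hz.1 x]

lemma four (a b c d : ℕ) (hab : a ≠ b) (hac : a ≠ c) (had : a ≠ d) (hbc : b ≠ c)
    (hbd : b ≠ d) (hcd : c ≠ d) :
    (sE R (c < a ∧ c < b ∧ a < d) * sE R (a < c ∧ a < d ∧ c < b)) *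
    (sE R (d < a ∧ d < b ∧ a < c) * sE R (a < d ∧ a < c ∧ d < b)) *
    ((sE R (c < b ∧ c < a ∧ b < d) * sE R (b < c ∧ b < d ∧ c < a)) *
    (sE R (d < b ∧ d < a ∧ b < c) * sE R (b < d ∧ b < c ∧ d < a))) =
    sE R (a < c) * sE R (a < d) * (sE R (b < c) * sE R (b < d)) := by
  have key : ∀ x y : ℕ, x ≠ y → (x < y ∧ ¬ y < x) ∨ (y < x ∧ ¬ x < y) := by
    intro x y h; omega
  obtain ⟨h1, h1'⟩ | ⟨h1, h1'⟩ := key a b hab <;> obtain ⟨h2, h2'⟩ | ⟨h2, h2'⟩ := key a c hac <;>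
  obtain ⟨h3, h3'⟩ | ⟨h3, h3'⟩ := key a d had <;> obtain ⟨h4, h4'⟩ | ⟨h4, h4'⟩ := key b c hbc <;>
  obtain ⟨h5, h5'⟩ | ⟨h5, h5'⟩ := key b d hbd <;> obtain ⟨h6, h6'⟩ | ⟨h6, h6'⟩ := key c d hcd <;>
  first
  | (exfalso; omega)
  | simp [sE, *]

/-- mixed crossing sign between two arcs -/
lemma arcs {z : ι → ι} (hz : ∀ i, z (z i) = i) {p : ι → ℕ} {i j : ι}
    (hi : p i ≠ p (z i)) (hj : p j ≠ p (z j)) (h1 : p i ≠ p j) (h2 : p i ≠ p (z j))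
    (h3 : p (z i) ≠ p j) (h4 : p (z i) ≠ p (z j)) :
    (sE R (dP p z i j) * sE R (dP p z j i)) *
    (sE R (dP p z i (z j)) * sE R (dP p z (z j) i)) *
    ((sE R (dP p z (z i) j) * sE R (dP p z j (z i))) *
    (sE R (dP p z (z i) (z j)) * sE R (dP p z (z j) (z i)))) =
    sE R (p i < p j) * sE R (p i < p (z j)) *
      (sE R (p (z i) < p j) * sE R (p (z i) < p (z j))) := by
  have := four (R := R) (p i) (p (z i)) (p j) (p (z j)) hi h1 h2 h3 h4 hj
  simp only [dP, hz]
  exact this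

end Helpers2
section Helpers3

variable {R : Type*} [CommRing R] {ι : Type*} [Fintype ι] [DecidableEq ι]

lemma halve2 {T T' : Finset ι} {z : ι → ι} (hz : St T z) (hz' : St T' z) {p : ι → ℕ}
    (hp : ∀ x ∈ T, ∀ y ∈ T, p x = p y → x = y) (hp' : ∀ x ∈ T', ∀ y ∈ T', p x = p y → x = y)
    (H : ι → ι → R) :
    ∏ x ∈ T, ∏ y ∈ T', H x y =
      ∏ i ∈ T.filter (fun x => p x < p (z x)), ∏ j ∈ T'.filter (fun x => p x < p (z x)),
        (H i j * H i (z j)) * (H (z i) j * H (z i) (z j)) := by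
  rw [halve hz hp]
  refine Finset.prod_congr rfl fun i _ => ?_
  rw [halve hz' hp', halve hz' hp', ← Finset.prod_mul_distrib]

lemma prod_diag (s : Finset ι) (Q : ι → ι → R) (h : ∀ i ∈ s, ∀ j ∈ s, i ≠ j → Q i j * Q j i = 1) :
    ∏ i ∈ s, ∏ j ∈ s, Q i j = ∏ i ∈ s, Q i i := by
  rw [← Finset.prod_product' s s Q, ← Finset.diag_union_offDiag,
    Finset.prod_union (Finset.disjoint_diag_offDiag s), Finset.prod_diag]
  rw [Finset.prod_involution (s := s.offDiag) (fun x _ => x.swap), mul_one]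
  · rintro ⟨i, j⟩ hx
    simp only [Finset.mem_offDiag] at hx
    exact h i hx.1 j hx.2.1 hx.2.2
  · rintro ⟨i, j⟩ hx _ h'
    simp only [Finset.mem_offDiag] at hx
    simp only [Prod.swap_prod_mk, Prod.mk.injEq] at h'
    exact hx.2.2 h'.2
  · rintro ⟨i, j⟩ hx
    simp only [Finset.mem_offDiag] at hx
    simpa using ⟨hx.2.1, hx.1, hx.2.2.symm⟩
  · rintro ⟨i, j⟩ hx
    rfl

lemma cpair (a b c d : ℕ) (h : a ≠ b) (h' : c ≠ d) :
    sE R (a < b ∧ d < c) * sE R (b < a ∧ c < d) = sE R (a < b) * sE R (c < d) := by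
  have key : ∀ x y : ℕ, x ≠ y → (x < y ∧ ¬ y < x) ∨ (y < x ∧ ¬ x < y) := by
    intro x y h; omega
  obtain ⟨h1, h1'⟩ | ⟨h1, h1'⟩ := key a b h <;> obtain ⟨h2, h2'⟩ | ⟨h2, h2'⟩ := key c d h' <;>
  simp [sE, *]

lemma sign_change {T : Finset ι} {z : ι → ι} (hz : St T z) {p p' : ι → ℕ}
    (hp : ∀ x ∈ T, ∀ y ∈ T, p x = p y → x = y) (hp' : ∀ x ∈ T, ∀ y ∈ T, p' x = p' y → x = y) :
    ∏ x ∈ T, ∏ y ∈ T,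
      (sE R (dP p' z x y) * sE R (dP p z x y) * sE R (p x < p y ∧ p' y < p' x)) =
    ∏ i ∈ T.filter (fun x => p x < p (z x)), sE R (p' (z i) < p' i) := by
  rw [halve2 hz hz hp hp, prod_diag]
  · refine Finset.prod_congr rfl fun i hi => ?_
    simp only [Finset.mem_filter] at hi
    have h2 : ¬ p (z i) < p i := by omega
    simp [dP, hz.1, hi.2, h2]
    simp [sE]
  · intro i hi j hj hij
    simp only [Finset.mem_filter] at hi hj
    obtain ⟨hi, hi2⟩ := hi
    obtain ⟨hj, hj2⟩ := hj
    have hzi := hz.2 i hi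
    have hzj := hz.2 j hj
    have n2 : i ≠ z j := by
      intro h
      have : z i = j := by rw [h, hz.1]
      rw [this] at hi2
      rw [← h] at hj2
      omega
    have n3 : z i ≠ j := by
      intro h; apply n2; rw [← h, hz.1]
    have n4 : z i ≠ z j := by
      intro h; apply hij; rw [← hz.1 i, h, hz.1]
    have a := arcs (R := R) hz.1 (p := p) (i := i) (j := j)
      (fun h => hzi.2 (hp _ hi _ hzi.1 h).symm) (fun h => hzj.2 (hp _ hj _ hzj.1 h).symm)
      (fun h => hij (hp _ hi _ hj h)) (fun h => n2 (hp _ hi _ hzj.1 h))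
      (fun h => n3 (hp _ hzi.1 _ hj h)) (fun h => n4 (hp _ hzi.1 _ hzj.1 h))
    have b := arcs (R := R) hz.1 (p := p') (i := i) (j := j)
      (fun h => hzi.2 (hp' _ hi _ hzi.1 h).symm) (fun h => hzj.2 (hp' _ hj _ hzj.1 h).symm)
      (fun h => hij (hp' _ hi _ hj h)) (fun h => n2 (hp' _ hi _ hzj.1 h))
      (fun h => n3 (hp' _ hzi.1 _ hj h)) (fun h => n4 (hp' _ hzi.1 _ hzj.1 h))
    have c1 := cpair (R := R) (p i) (p j) (p' i) (p' j)
      (fun h => hij (hp _ hi _ hj h)) (fun h => hij (hp' _ hi _ hj h))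
    have c2 := cpair (R := R) (p i) (p (z j)) (p' i) (p' (z j))
      (fun h => n2 (hp _ hi _ hzj.1 h)) (fun h => n2 (hp' _ hi _ hzj.1 h))
    have c3 := cpair (R := R) (p (z i)) (p j) (p' (z i)) (p' j)
      (fun h => n3 (hp _ hzi.1 _ hj h)) (fun h => n3 (hp' _ hzi.1 _ hj h))
    have c4 := cpair (R := R) (p (z i)) (p (z j)) (p' (z i)) (p' (z j))
      (fun h => n4 (hp _ hzi.1 _ hzj.1 h)) (fun h => n4 (hp' _ hzi.1 _ hzj.1 h))
    have s1 := sE_mul_self (R := R) (p i < p j)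
    have s2 := sE_mul_self (R := R) (p i < p (z j))
    have s3 := sE_mul_self (R := R) (p (z i) < p j)
    have s4 := sE_mul_self (R := R) (p (z i) < p (z j))
    have t1 := sE_mul_self (R := R) (p' i < p' j)
    have t2 := sE_mul_self (R := R) (p' i < p' (z j))
    have t3 := sE_mul_self (R := R) (p' (z i) < p' j)
    have t4 := sE_mul_self (R := R) (p' (z i) < p' (z j))
    have E := congrArg₂ (· * ·) (congrArg₂ (· * ·) a b)
      (congrArg₂ (· * ·) (congrArg₂ (· * ·) c1 c2) (congrArg₂ (· * ·) c3 c4))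
    have F := congrArg₂ (· * ·) 
      (congrArg₂ (· * ·) (congrArg₂ (· * ·) s1 s2) (congrArg₂ (· * ·) s3 s4))
      (congrArg₂ (· * ·) (congrArg₂ (· * ·) t1 t2) (congrArg₂ (· * ·) t3 t4))
    simp only [mul_one] at E F
    rw [← F]
    refine Eq.trans (Eq.trans ?_ E) ?_
    · generalize sE R (dP p z i j) = x1, sE R (dP p z j i) = x2
      ring
    · ring

lemma tm_change {T : Finset ι} {z : ι → ι} (hz : St T z) {p p' : ι → ℕ}
    (hp : ∀ x ∈ T, ∀ y ∈ T, p x = p y → x = y) (hp' : ∀ x ∈ T, ∀ y ∈ T, p' x = p' y → x = y)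
    (f : ι → ι → R) (hf : ∀ x y, f x y = - f y x) :
    tm T p' f z = (∏ x ∈ T, ∏ y ∈ T, sE R (p x < p y ∧ p' y < p' x)) * tm T p f z := by
  have A : ∀ q : ι → ℕ, (∀ x ∈ T, ∀ y ∈ T, q x = q y → x = y) →
      (∏ i ∈ T, if q (z i) < q i then f (z i) i else 1) =
      ∏ i ∈ T.filter (fun x => p x < p (z x)), sE R (q (z i) < q i) * f i (z i) := by
    intro q hq
    rw [halve hz hp]
    refine Finset.prod_congr rfl fun i hi => ?_
    simp only [Finset.mem_filter] at hi
    have h1 : q i ≠ q (z i) := fun h => (hz.2 i hi.1).2 (hq _ hi.1 _ (hz.2 i hi.1).1 h).symm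
    rw [hz.1]
    rcases lt_or_gt_of_ne h1 with h | h
    · simp [h, h.not_gt, sE]
    · simp [h, h.not_gt, sE]
      rw [hf]
  have B := sign_change (R := R) hz hp hp'
  simp only [Finset.prod_mul_distrib] at B
  have A1 := A p hp
  have A2 := A p' hp'
  have A3 : ∏ i ∈ T.filter (fun x => p x < p (z x)), sE R (p (z i) < p i) * f i (z i) =
     ∏ i ∈ T.filter (fun x => p x < p (z x)), f i (z i) := by
    refine Finset.prod_congr rfl fun i hi => ?_
    simp only [Finset.mem_filter] at hi
    simp [sE, hi.2.not_gt]
  rw [A3] at A1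
  rw [Finset.prod_mul_distrib, ← B] at A2
  unfold tm
  rw [A1, A2]
  have S : (∏ x ∈ T, ∏ y ∈ T, sE R (dP p' z x y)) * (∏ x ∈ T, ∏ y ∈ T, sE R (dP p' z x y)) = 1 := by
    simp [← Finset.prod_mul_distrib, sE_mul_self]
  linear_combination ((∏ x ∈ T, ∏ y ∈ T, sE R (dP p z x y)) *
     (∏ x ∈ T, ∏ y ∈ T, sE R (p x < p y ∧ p' y < p' x)) *
     ∏ i ∈ T.filter (fun x => p x < p (z x)), f i (z i)) * S

lemma PFT_change {T : Finset ι} {p p' : ι → ℕ}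
    (hp : ∀ x ∈ T, ∀ y ∈ T, p x = p y → x = y) (hp' : ∀ x ∈ T, ∀ y ∈ T, p' x = p' y → x = y)
    (f : ι → ι → R) (hf : ∀ x y, f x y = - f y x) :
    PFT T p' f = (∏ x ∈ T, ∏ y ∈ T, sE R (p x < p y ∧ p' y < p' x)) * PFT T p f := by
  unfold PFT
  rw [Finset.mul_sum]
  exact Finset.sum_congr rfl fun z hz => tm_change (FI_St hz) hp hp' f hf

end Helpers3
section Helpers4

variable {R : Type*} [CommRing R] {ι : Type*} [Fintype ι] [DecidableEq ι]

lemma card_half {T : Finset ι} {z : ι → ι} (hz : St T z) {p : ι → ℕ}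
    (hp : ∀ x ∈ T, ∀ y ∈ T, p x = p y → x = y) :
    T.card = 2 * (T.filter (fun x => p x < p (z x))).card := by
  have := halve hz hp (fun _ => (2 : ℕ))
  simp only [Finset.prod_const] at this
  rw [← pow_two, ← pow_mul] at this
  exact Nat.pow_right_injective le_rfl this

lemma PFT_odd {T : Finset ι} {p : ι → ℕ} (hp : ∀ x ∈ T, ∀ y ∈ T, p x = p y → x = y)
    (f : ι → ι → R) (h : ¬ Even T.card) : PFT T p f = 0 := by
  unfold PFT
  refine Finset.sum_eq_zero fun z hz => ?_
  exfalso; apply h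
  rw [card_half (FI_St hz) hp]; simp

lemma PFT_neg {T : Finset ι} {p : ι → ℕ} (hp : ∀ x ∈ T, ∀ y ∈ T, p x = p y → x = y)
    (f g : ι → ι → R) (hg : ∀ x ∈ T, ∀ y ∈ T, g x y = - f x y) :
    PFT T p g = (-1) ^ (T.card / 2) * PFT T p f := by
  unfold PFT
  rw [Finset.mul_sum]
  refine Finset.sum_congr rfl fun z hz => ?_
  have hz := FI_St hz
  have h1 : (∏ i ∈ T, if p (z i) < p i then g (z i) i else 1) =
      (∏ i ∈ T, sE R (p (z i) < p i)) * ∏ i ∈ T, if p (z i) < p i then f (z i) i else 1 := by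
    rw [← Finset.prod_mul_distrib]
    refine Finset.prod_congr rfl fun i hi => ?_
    rw [hg _ (hz.2 i hi).1 _ hi]
    unfold sE; split_ifs <;> simp
  have h2 : (∏ i ∈ T, sE R (p (z i) < p i)) = (-1) ^ (T.card / 2) := by
    rw [halve hz hp, card_half hz hp, Nat.mul_div_cancel_left _ (by norm_num)]
    rw [← Finset.prod_const]
    refine Finset.prod_congr rfl fun i hi => ?_
    simp only [Finset.mem_filter] at hi
    simp [sE, hz.1, hi.2, hi.2.not_gt]
  unfold tm
  rw [h1, h2]; ring

lemma PFT_zero_row {T : Finset ι} {p : ι → ℕ} 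
    (f : ι → ι → R) (x : ι) (hx : x ∈ T) (h : ∀ y, f x y = 0) (h' : ∀ y, f y x = 0)
    (hp : ∀ x ∈ T, ∀ y ∈ T, p x = p y → x = y) :
    PFT T p f = 0 := by
  unfold PFT tm
  refine Finset.sum_eq_zero fun z hz => ?_
  have hz := FI_St hz
  apply mul_eq_zero_of_right
  have h1 : p x ≠ p (z x) := fun h => (hz.2 x hx).2 (hp _ hx _ (hz.2 x hx).1 h).symm
  rcases lt_or_gt_of_ne h1 with h1 | h1
  · apply Finset.prod_eq_zero (hz.2 x hx).1
    simp [hz.1, h1, h]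
  · apply Finset.prod_eq_zero hx
    simp [h1, h']

lemma PFT_eq_rows {T : Finset ι} {p : ι → ℕ} (hp : ∀ x ∈ T, ∀ y ∈ T, p x = p y → x = y)
    (f : ι → ι → R) (hf : ∀ x y, f x y = - f y x) (hf0 : ∀ x, f x x = 0) (x0 y0 : ι)
    (hx0 : x0 ∈ T) (hy0 : y0 ∈ T) (hne : x0 ≠ y0) (hrow : ∀ w, f x0 w = f y0 w) :
    PFT T p f = 0 := by
  let q : ι → ℕ := fun x => if x = x0 then 0 else if x = y0 then 1 else p x + 2
  have hq : ∀ x ∈ T, ∀ y ∈ T, q x = q y → x = y := by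
    intro x hx y hy h
    simp only [q] at h
    split_ifs at h <;> first | (subst_vars; rfl) | omega | exact hp x hx y hy (by omega)
  suffices h : PFT T q f = 0 by
    rw [PFT_change hq hp f hf, h, mul_zero]
  set σ : Equiv.Perm ι := Equiv.swap x0 y0 with hσ
  have hσσ : ∀ x, σ (σ x) = x := fun x => Equiv.swap_apply_self _ _ _
  have hσT : ∀ x, x ∈ T → σ x ∈ T := by
    intro x hx
    simp only [hσ, Equiv.swap_apply_def]
    split_ifs <;> assumption
  have hσT' : ∀ x, σ x ∈ T ↔ x ∈ T := fun x => ⟨fun h => by simpa [hσσ] using hσT _ h, hσT x⟩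
  have hrow' : ∀ x w, f (σ x) w = f x w := by
    intro x w
    simp only [hσ, Equiv.swap_apply_def]
    split_ifs with h1 h2
    · rw [h1, hrow]
    · rw [h2, hrow]
    · rfl
  have hff : ∀ x y, f (σ x) (σ y) = f x y := by
    intro x y
    rw [hrow', hf, hrow', ← hf]
  have hpr : ∀ (h : ι → R), ∏ x ∈ T, h x = ∏ x ∈ T, h (σ x) := by
    intro h
    refine Finset.prod_nbij' σ σ (fun x hx => hσT x hx) (fun x hx => hσT x hx)
      (fun x _ => hσσ x) (fun x _ => hσσ x) (fun x _ => by rw [hσσ])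
  have hqσ : ∀ x ∈ T, ∀ y ∈ T, (q ∘ σ) x = (q ∘ σ) y → x = y := by
    intro x hx y hy h
    exact σ.injective (hq _ (hσT _ hx) _ (hσT _ hy) h)
  have hsign : ∏ x ∈ T, ∏ y ∈ T, sE R (q x < q y ∧ (q ∘ σ) y < (q ∘ σ) x) = -1 := by
    rw [Finset.prod_eq_single x0, Finset.prod_eq_single y0]
    · simp [q, hσ, sE, hne.symm]
    · intro y _ hy
      by_cases h : y = x0
      · simp [sE, h]
      · simp [q, hσ, sE, hne.symm, Equiv.swap_apply_of_ne_of_ne h hy, h, hy]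
    · intro h; exact absurd hy0 h
    · intro x _ hx
      refine Finset.prod_eq_one fun y _ => ?_
      unfold sE
      rw [if_neg]
      simp only [q, hσ, Function.comp_apply, Equiv.swap_apply_def]
      clear hf hf0 hrow hrow' hff hpr hqσ hσT hσT' hσσ hq hp
      split_ifs <;> simp_all <;> omega
    · intro h; exact absurd hx0 h
  have hterm : ∀ z ∈ FI T, tm T q f (σ ∘ z ∘ σ) = - tm T q f z := by
    intro z hz
    have h1 := tm_change (FI_St hz) hq hqσ f hf
    rw [hsign] at h1
    rw [neg_one_mul] at h1
    rw [← h1]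
    unfold tm
    rw [hpr]
    congr 1
    · refine Finset.prod_congr rfl fun x _ => ?_
      rw [hpr]
      refine Finset.prod_congr rfl fun y _ => ?_
      simp [dP, hσσ]
    · rw [hpr]
      refine Finset.prod_congr rfl fun x _ => ?_
      simp [hσσ, hff]
  unfold PFT
  refine Finset.sum_involution (fun z _ => σ ∘ z ∘ σ) ?_ ?_ ?_ ?_
  · intro z hz
    rw [hterm z hz, add_neg_cancel]
  · intro z hz hne0 heq
    apply hne0
    have hz' := FI_St hz
    have e1 : σ (z (σ x0)) = z x0 := congrFun heq x0
    have hs0 : σ x0 = y0 := by simp [hσ]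
    have hzy : z y0 = x0 := by
      by_contra h
      have h2 := (hz'.2 y0 hy0).2
      rw [hs0] at e1
      rw [hσ, Equiv.swap_apply_of_ne_of_ne h h2] at e1
      apply hne
      rw [← hz'.1 x0, ← e1, hz'.1]
    unfold tm
    apply mul_eq_zero_of_right
    apply Finset.prod_eq_zero hy0
    rw [hzy, hrow, hf0]
    simp [q, hne.symm]
  · intro z hz
    simp only [FI, Finset.mem_filter, Finset.mem_univ, true_and] at hz ⊢
    refine ⟨fun i => by simp [hσσ, hz.1], fun i => ?_⟩
    rw [← hσT', ← hz.2]
    simp only [Function.comp_apply, ne_eq, not_iff_not]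
    constructor
    · intro h; rw [← hσσ (z (σ i)), h]
    · intro h; rw [h, hσσ]
  · intro z hz
    funext i; simp [hσσ]

end Helpers4
section Helpers5

variable {R : Type*} [CommRing R] {ι : Type*} [Fintype ι] [DecidableEq ι]

lemma prod_expand {z : ι → ι} (hz : St Finset.univ z) {p : ι → ℕ} (hp : Function.Injective p)
    (F G : ι → R) :
    (∏ i, if p (z i) < p i then F i + G i else 1) =
      ∑ T ∈ Finset.univ.filter (fun T : Finset ι => ∀ i ∈ T, z i ∈ T),
        (∏ i ∈ T, if p (z i) < p i then F i else 1) *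
        (∏ i ∈ Tᶜ, if p (z i) < p i then G i else 1) := by
  simp only [← Finset.prod_filter]
  rw [Finset.prod_add]
  have hlt : ∀ i, ¬ p (z i) < p i → p i < p (z i) := by
    intro i h
    have : p i ≠ p (z i) := fun h => (hz.2 i (Finset.mem_univ _)).2 (hp h).symm
    omega
  refine Finset.sum_bij' (fun t _ => Finset.univ.filter (fun i => i ∈ t ∨ z i ∈ t))
    (fun T _ => T.filter (fun i => p (z i) < p i)) ?_ ?_ ?_ ?_ ?_
  · intro t ht
    simp only [Finset.mem_filter, Finset.mem_univ, true_and, hz.1]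
    intro i h; exact h.symm
  · intro T hT
    simp only [Finset.mem_powerset]
    exact Finset.filter_subset_filter _ (Finset.subset_univ _)
  · intro t ht
    simp only [Finset.mem_powerset] at ht
    ext i
    simp only [Finset.mem_filter, Finset.mem_univ, true_and]
    constructor
    · rintro ⟨h | h, h'⟩
      · exact h
      · have := ht h
        simp [hz.1] at this
        omega
    · intro h
      have := ht h
      simp at this
      exact ⟨Or.inl h, this⟩
  · intro T hT
    simp only [Finset.mem_filter, Finset.mem_univ, true_and] at hT
    ext i
    simp only [Finset.mem_filter, Finset.mem_univ, true_and, hz.1]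
    constructor
    · rintro (h | h)
      · exact h.1
      · have := hT _ h.1
        rwa [hz.1] at this
    · intro h
      by_cases h' : p (z i) < p i
      · exact Or.inl ⟨h, h'⟩
      · exact Or.inr ⟨hT _ h, hlt _ h'⟩
  · intro t ht
    simp only [Finset.mem_powerset] at ht
    have key : ∀ i, p (z i) < p i → z i ∉ t := by
      intro i h h'
      have := ht h'
      simp [hz.1] at this
      omega
    congr 1
    · refine Finset.prod_congr ?_ fun _ _ => rfl
      ext i
      simp only [Finset.mem_filter, Finset.mem_univ, true_and]
      constructor
      · intro h
        have := ht h
        simp at this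
        exact ⟨Or.inl h, this⟩
      · rintro ⟨h | h, h'⟩
        · exact h
        · exact absurd h (key _ h')
    · refine Finset.prod_congr ?_ fun _ _ => rfl
      ext i
      simp only [Finset.mem_filter, Finset.mem_univ, true_and, Finset.mem_sdiff, Finset.mem_compl]
      constructor
      · rintro ⟨h, h'⟩
        exact ⟨fun h2 => h2.elim h' (key _ h), h⟩
      · rintro ⟨h, h'⟩
        exact ⟨h', fun h2 => h (Or.inl h2)⟩

lemma mixed_sign {z : ι → ι} (hz : St Finset.univ z) {p : ι → ℕ} (hp : Function.Injective p)
    {T : Finset ι} (hT : ∀ i ∈ T, z i ∈ T) :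
    ∏ x, ∏ y, sE R (dP p z x y) =
      (∏ x ∈ T, ∏ y ∈ T, sE R (dP p z x y)) * (∏ x ∈ Tᶜ, ∏ y ∈ Tᶜ, sE R (dP p z x y)) *
      ∏ x ∈ T, ∏ y ∈ Tᶜ, sE R (p x < p y) := by
  have hzT : St T z := ⟨hz.1, fun i hi => ⟨hT i hi, (hz.2 i (Finset.mem_univ _)).2⟩⟩
  have hzT' : St Tᶜ z := ⟨hz.1, fun i hi => ⟨by
    simp only [Finset.mem_compl] at hi ⊢
    intro h; apply hi; have := hT _ h; rwa [hz.1] at this, (hz.2 i (Finset.mem_univ _)).2⟩⟩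
  have hm : (∏ x ∈ T, ∏ y ∈ Tᶜ, sE R (dP p z x y)) * (∏ x ∈ Tᶜ, ∏ y ∈ T, sE R (dP p z x y)) =
      ∏ x ∈ T, ∏ y ∈ Tᶜ, sE R (p x < p y) := by
    rw [Finset.prod_comm (s := Tᶜ), ← Finset.prod_mul_distrib]
    simp only [← Finset.prod_mul_distrib]
    have hp1 : ∀ x ∈ T, ∀ y ∈ T, p x = p y → x = y := fun x _ y _ h => hp h
    have hp2 : ∀ x ∈ Tᶜ, ∀ y ∈ Tᶜ, p x = p y → x = y := fun x _ y _ h => hp h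
    rw [halve2 hzT hzT' hp1 hp2, halve2 hzT hzT' hp1 hp2]
    refine Finset.prod_congr rfl fun i hi => Finset.prod_congr rfl fun j hj => ?_
    simp only [Finset.mem_filter] at hi hj
    have ne : ∀ x ∈ T, ∀ y ∈ Tᶜ, p x ≠ p y := by
      intro x hx y hy h
      rw [hp h] at hx
      exact Finset.mem_compl.1 hy hx
    have hi' := (hzT.2 i hi.1).1
    have hj' := (hzT'.2 j hj.1).1
    exact arcs hz.1 hi.2.ne hj.2.ne (ne _ hi.1 _ hj.1) (ne _ hi.1 _ hj') (ne _ hi' _ hj.1)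
      (ne _ hi' _ hj')
  rw [← hm, ← Finset.prod_mul_prod_compl T]
  simp only [← Finset.prod_mul_prod_compl T (fun y => sE R (dP p z _ y)), Finset.prod_mul_distrib]
  ring

lemma PFT_add {p : ι → ℕ} (hp : Function.Injective p) (f g : ι → ι → R) :
    PFT Finset.univ p (fun x y => f x y + g x y) =
      ∑ T : Finset ι, (∏ x ∈ T, ∏ y ∈ Tᶜ, sE R (p x < p y)) * PFT T p f * PFT Tᶜ p g := by
  have h1 : PFT Finset.univ p (fun x y => f x y + g x y) =
      ∑ z ∈ FI (Finset.univ : Finset ι),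
        ∑ T ∈ Finset.univ.filter (fun T : Finset ι => ∀ i ∈ T, z i ∈ T),
        (∏ x ∈ T, ∏ y ∈ Tᶜ, sE R (p x < p y)) * (tm T p f z * tm Tᶜ p g z) := by
    unfold PFT
    refine Finset.sum_congr rfl fun z hz => ?_
    have hz := FI_St hz
    unfold tm
    rw [prod_expand hz hp (fun i => f (z i) i) (fun i => g (z i) i), Finset.mul_sum]
    refine Finset.sum_congr rfl fun T hT => ?_
    rw [mixed_sign hz hp (by simpa using hT)]
    ring
  rw [h1, Finset.sum_comm' (t' := Finset.univ)
    (s' := fun T => (FI Finset.univ).filter (fun z => ∀ i ∈ T, z i ∈ T)) (by simp)]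
  refine Finset.sum_congr rfl fun T _ => ?_
  rw [← Finset.mul_sum, mul_assoc]
  congr 1
  unfold PFT
  rw [Finset.sum_mul_sum, ← Finset.sum_product']
  have tmc : ∀ (T : Finset ι) (f : ι → ι → R) (z z' : ι → ι), (∀ i ∈ T, z i = z' i) →
      tm T p f z = tm T p f z' := by
    intro T f z z' h
    unfold tm
    congr 1
    · refine Finset.prod_congr rfl fun x hx => Finset.prod_congr rfl fun y hy => ?_
      simp only [dP, h x hx, h y hy]
    · refine Finset.prod_congr rfl fun x hx => ?_
      rw [h x hx]
  refine Finset.sum_bij' (fun z _ => (T.piecewise z id, T.piecewise id z))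
    (fun w _ => T.piecewise w.1 w.2) ?_ ?_ ?_ ?_ ?_
  · intro z hz
    simp only [FI, Finset.mem_filter, Finset.mem_univ, true_and, iff_true] at hz
    have hzc : ∀ i, i ∉ T → z i ∉ T := by
      intro i hi h; apply hi; have := hz.2 _ h; rwa [hz.1.1] at this
    simp only [Finset.mem_product, FI, Finset.mem_filter, Finset.mem_univ, true_and,
      Finset.mem_compl]
    refine ⟨⟨fun i => ?_, fun i => ?_⟩, ⟨fun i => ?_, fun i => ?_⟩⟩
    all_goals by_cases hi : i ∈ T
    all_goals simp [Finset.piecewise, hi, hz.1.2]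
    · simp [Finset.piecewise, hz.2 i hi, hz.1.1]
    · simp [Finset.piecewise, hzc i hi, hz.1.1]
  · rintro ⟨w1, w2⟩ hw
    simp only [Finset.mem_product] at hw
    have a1 := fun i (hi : i ∈ T) => FI_mem hw.1 hi
    have a2 := fun i (hi : i ∉ T) => Finset.mem_compl.1 (FI_mem hw.2 (Finset.mem_compl.2 hi))
    have b1 := FI_inv hw.1
    have b2 := FI_inv hw.2
    have c1 := fun i (hi : i ∈ T) => FI_ne hw.1 hi
    have c2 := fun i (hi : i ∉ T) => FI_ne hw.2 (Finset.mem_compl.2 hi)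
    simp only [FI, Finset.mem_filter, Finset.mem_univ, true_and, iff_true]
    refine ⟨⟨fun i => ?_, fun i => ?_⟩, fun i hi => ?_⟩
    · by_cases hi : i ∈ T
      · simp [hi, a1 i hi, b1]
      · simp [hi, a2 i hi, b2]
    · by_cases hi : i ∈ T
      · simp [hi, c1 i hi]
      · simp [hi, c2 i hi]
    · simp [hi, a1 i hi]
  · intro z hz
    funext i
    by_cases hi : i ∈ T <;> simp [hi]
  · rintro ⟨w1, w2⟩ hw
    simp only [Finset.mem_product] at hw
    refine Prod.ext ?_ ?_
    · funext i
      by_cases hi : i ∈ T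
      · simp [hi]
      · simp [hi, FI_fix hw.1 hi]
    · funext i
      by_cases hi : i ∈ T
      · simp [hi, FI_fix hw.2 (show i ∉ Tᶜ by simpa using hi)]
      · simp [hi]
  · intro z hz
    congr 1
    · apply tmc; intro i hi; simp [hi]
    · apply tmc; intro i hi; simp at hi; simp [hi]

end Helpers5
section Helpers6

variable {R : Type*} [CommRing R] {ι : Type*} [Fintype ι] [DecidableEq ι]

lemma pf_eq {N : ℕ} (T : Finset ι) (p : ι → ℕ) (f : ι → ι → R) (e : Fin N → ι)
    (heT : ∀ x, x ∈ T ↔ ∃ k, e k = x) (hm : ∀ k l, p (e k) < p (e l) ↔ k < l)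
    (M : Matrix (Fin N) (Fin N) R) (hM : ∀ k l, M k l = f (e k) (e l)) :
    Pfaffian M = PFT T p f := by
  have he : Function.Injective e := by
    intro k l h
    have h1 := hm k l
    have h2 := hm l k
    rw [h] at h1 h2
    simp only [lt_irrefl, false_iff, not_lt] at h1 h2
    exact le_antisymm h2 h1
  have hT : T = Finset.univ.image e := by
    ext x; rw [heT]; simp
  have hprod : ∀ h : ι → R, ∏ x ∈ T, h x = ∏ k, h (e k) := by
    intro h
    rw [hT, Finset.prod_image (fun _ _ _ _ h => he h)]
  unfold Pfaffian PFT
  refine Finset.sum_bij (fun z _ => Function.extend e (e ∘ z) id) ?_ ?_ ?_ ?_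
  · intro z hz
    simp only [Finset.mem_filter, Finset.mem_univ, true_and] at hz
    simp only [FI, Finset.mem_filter, Finset.mem_univ, true_and]
    refine ⟨fun i => ?_, fun i => ?_⟩
    · by_cases hi : ∃ k, e k = i
      · obtain ⟨k, rfl⟩ := hi
        simp [he.extend_apply, hz.2]
      · simp [Function.extend_apply' _ _ _ hi]
    · rw [heT]
      by_cases hi : ∃ k, e k = i
      · obtain ⟨k, rfl⟩ := hi
        simp [he.extend_apply, he.eq_iff, hz.1]
      · simp [Function.extend_apply' _ _ _ hi, hi]
  · intro z hz z' hz' h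
    ext k
    have := congrFun h (e k)
    simp only [he.extend_apply, Function.comp_apply] at this
    rw [he this]
  · intro w hw
    have h1 : ∀ k, ∃ l, e l = w (e k) := fun k =>
      (heT _).1 (FI_mem hw ((heT _).2 ⟨k, rfl⟩))
    choose z hz using h1
    have hzz : Function.Involutive z := by
      intro k
      apply he
      rw [hz, hz, FI_inv hw]
    refine ⟨hzz.toPerm z, ?_, ?_⟩
    · simp only [Finset.mem_filter, Finset.mem_univ, true_and, Function.Involutive.coe_toPerm]
      refine ⟨fun k h => ?_, hzz⟩
      have := hz k
      rw [h] at this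
      exact FI_ne hw ((heT _).2 ⟨k, rfl⟩) this.symm
    · funext i
      by_cases hi : ∃ k, e k = i
      · obtain ⟨k, rfl⟩ := hi
        simp [he.extend_apply, hz]
      · rw [Function.extend_apply' _ _ _ hi, FI_fix hw (fun h => hi ((heT _).1 h))]
        rfl
  · intro z hz
    unfold tm
    rw [hprod, hprod]
    congr 1
    · simp only [hprod]
      rw [← Finset.prod_product', prod_sE]
      unfold ellFpfFin
      congr 2
      simp only [dP, he.extend_apply, Function.comp_apply, hm]
      rfl
    · rw [Finset.prod_filter]
      refine Finset.prod_congr rfl fun k _ => ?_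
      simp only [he.extend_apply, Function.comp_apply, hm, hM]

lemma prodA {M : Type*} [CommMonoid M] (A S : Finset ℕ) (h : S ⊆ A) (F : ℕ → M) :
    ∏ x ∈ S, F x =
      ∏ k : Fin A.card, if A.orderEmbOfFin rfl k ∈ S then F (A.orderEmbOfFin rfl k) else 1 := by
  have : S = A.filter (· ∈ S) := by
    ext x; simp only [Finset.mem_filter]; exact ⟨fun hx => ⟨h hx, hx⟩, fun hx => hx.2⟩
  conv_lhs => rw [this, Finset.prod_filter]
  conv_lhs => rw [← Finset.map_orderEmbOfFin_univ A rfl]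
  rw [Finset.prod_map]
  rfl

lemma sum_idx (T S : Finset ℕ) (h : S ⊆ T) :
    (∑ t : Fin T.card, if T.orderEmbOfFin rfl t ∈ S then (t : ℕ) + 1 else 0) =
      ∑ x ∈ S, (T.filter (· ≤ x)).card := by
  have h1 := prodA (M := Multiplicative ℕ) T S h
    (fun x => Multiplicative.ofAdd (T.filter (· ≤ x)).card)
  have h2 : ∑ x ∈ S, (T.filter (· ≤ x)).card = ∑ k : Fin T.card,
      if T.orderEmbOfFin rfl k ∈ S then (T.filter (· ≤ T.orderEmbOfFin rfl k)).card else 0 := h1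
  rw [h2]
  refine Finset.sum_congr rfl fun t _ => ?_
  split_ifs with ht
  · have : T.filter (· ≤ T.orderEmbOfFin rfl t) =
        (Finset.Iic t).map (T.orderEmbOfFin rfl).toEmbedding := by
      ext x
      simp only [Finset.mem_filter, Finset.mem_map, Finset.mem_Iic]
      constructor
      · rintro ⟨hx, hx'⟩
        have : x ∈ Set.range (T.orderEmbOfFin rfl) := by
          rw [Finset.range_orderEmbOfFin]; exact hx
        obtain ⟨k, rfl⟩ := this
        exact ⟨k, by simpa using hx', rfl⟩
      · rintro ⟨k, hk, rfl⟩
        exact ⟨Finset.orderEmbOfFin_mem _ _ _, by simpa using hk⟩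
    rw [this]; simp
  · rfl

lemma sum_range_choose (s : ℕ) : ∑ i ∈ Finset.range s, i = s.choose 2 := by
  induction s with
  | zero => rfl
  | succ n ih => rw [Finset.sum_range_succ, ih, Nat.choose_succ_succ n 1]; simp; ring

lemma setSgn_eq (T S : Finset ℕ) (h : S ⊆ T) :
    (-1 : R) ^ setSgnExp T S = ∏ x ∈ S, ∏ y ∈ T \ S, sE R (x < y) := by
  simp only [prod_sE]
  rw [Finset.prod_pow_eq_pow_sum]
  have h0 := sum_idx T S h
  have h1 : ∑ x ∈ S, (S.filter (· ≤ x)).card = S.card.choose 2 + S.card := by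
    rw [← sum_idx S S (Finset.Subset.refl _)]
    simp only [Finset.orderEmbOfFin_mem, if_true]
    rw [Finset.sum_add_distrib, Fin.sum_univ_eq_sum_range (fun i => i), sum_range_choose]
    simp
  have h2 : ∑ x ∈ S, (T.filter (· ≤ x)).card + ∑ x ∈ S, ((T \ S).filter (x < ·)).card =
      ∑ x ∈ S, (S.filter (· ≤ x)).card + S.card * (T \ S).card := by
    rw [← smul_eq_mul S.card, ← Finset.sum_const, ← Finset.sum_add_distrib,
      ← Finset.sum_add_distrib]
    refine Finset.sum_congr rfl fun x hx => ?_
    have a1 : (T.filter (· ≤ x)).card = (S.filter (· ≤ x)).card + ((T \ S).filter (· ≤ x)).card := by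
      rw [← Finset.card_union_of_disjoint, ← Finset.filter_union, Finset.union_sdiff_of_subset h]
      exact Finset.disjoint_filter_filter Finset.disjoint_sdiff
    have a2 := Finset.card_filter_add_card_filter_not (s := T \ S) (· ≤ x)
    simp only [not_le] at a2
    omega
  have h3 : T.card = S.card + (T \ S).card := by
    rw [Finset.card_sdiff_of_subset h]
    have := Finset.card_le_card h
    omega
  have h4 : setSgnExp T S + ∑ x ∈ S, ((T \ S).filter (x < ·)).card =
      2 * (S.card * (T \ S).card + S.card.choose 2) + S.card * (S.card + 1) := by
    unfold setSgnExp
    rw [h0, add_assoc, h2, h1, h3]; ring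
  have h5 : Even (setSgnExp T S + ∑ x ∈ S, ((T \ S).filter (x < ·)).card) := by
    rw [h4]
    exact (even_two_mul _).add (Nat.even_mul_succ_self _)
  rcases Nat.even_or_odd (setSgnExp T S) with e | e
  · rw [e.neg_one_pow, Even.neg_one_pow ((Nat.even_add.1 h5).1 e)]
  · rw [e.neg_one_pow, Odd.neg_one_pow]
    rw [← Nat.not_even_iff_odd] at e ⊢
    exact fun h => e ((Nat.even_add.1 h5).2 h)

end Helpers6
section Helpers7

variable {K : Type*} [CommRing K]

lemma UssP_skew (x y : ℕ) : UssP K x y = - UssP K y x := by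
  unfold UssP
  by_cases h : 1 ≤ y ∧ y < x
  · have h' : ¬ (1 ≤ x ∧ x < y) := by omega
    simp only [dif_pos h, dif_neg h', neg_neg]
  · by_cases h' : 1 ≤ x ∧ x < y
    · simp only [dif_pos h', dif_neg h]
    · simp only [dif_neg h', dif_neg h, neg_zero]

lemma UssP_self (x : ℕ) : UssP K x x = 0 := by
  simp [UssP]

def lab (A B : Finset ℕ) : Fin B.card ⊕ Fin A.card → ℕ :=
  Sum.elim (fun k => B.orderEmbOfFin rfl k) (fun k => A.orderEmbOfFin rfl k)

def pos (A B : Finset ℕ) (x : Fin B.card ⊕ Fin A.card) : ℕ := (finSumFinEquiv x).val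

lemma pos_inj (A B : Finset ℕ) : Function.Injective (pos A B) :=
  fun _ _ h => finSumFinEquiv.injective (Fin.ext h)

lemma pos_inl (A B : Finset ℕ) (k : Fin B.card) : pos A B (Sum.inl k) = k := by
  simp [pos]

lemma pos_inr (A B : Finset ℕ) (k : Fin A.card) : pos A B (Sum.inr k) = B.card + k := by
  simp [pos]

def tau (A B S : Finset ℕ) : Finset (Fin B.card ⊕ Fin A.card) :=
  Finset.univ.filter fun x => x.isLeft = true ∨ lab A B x ∈ S

lemma mem_tau_inl (A B S : Finset ℕ) (k : Fin B.card) : Sum.inl k ∈ tau A B S := by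
  unfold tau; rw [Finset.mem_filter]; exact ⟨Finset.mem_univ _, Or.inl rfl⟩

lemma mem_tau_inr (A B S : Finset ℕ) (k : Fin A.card) :
    Sum.inr k ∈ tau A B S ↔ A.orderEmbOfFin rfl k ∈ S := by
  unfold tau; rw [Finset.mem_filter]
  simp [lab]

lemma prod_tau (A B S : Finset ℕ) {M : Type*} [CommMonoid M] (h : Fin B.card ⊕ Fin A.card → M) :
    ∏ x ∈ tau A B S, h x = (∏ k, h (Sum.inl k)) *
      ∏ k : Fin A.card, if A.orderEmbOfFin rfl k ∈ S then h (Sum.inr k) else 1 := by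
  unfold tau
  rw [Finset.prod_filter, Fintype.prod_sum_type]
  simp [lab]

lemma prod_tau_compl (A B S : Finset ℕ) {M : Type*} [CommMonoid M]
    (h : Fin B.card ⊕ Fin A.card → M) :
    ∏ x ∈ (tau A B S)ᶜ, h x =
      ∏ k : Fin A.card, if A.orderEmbOfFin rfl k ∈ A \ S then h (Sum.inr k) else 1 := by
  unfold tau
  rw [Finset.compl_filter, Finset.prod_filter, Fintype.prod_sum_type]
  simp [lab]

lemma card_tau (A B S : Finset ℕ) (h : S ⊆ A) : (tau A B S).card = B.card + S.card := by
  have h1 := prod_tau (M := Multiplicative ℕ) A B S (fun _ => Multiplicative.ofAdd 1)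
  have h2 := prodA (M := Multiplicative ℕ) A S h (fun _ => Multiplicative.ofAdd 1)
  rw [← h2] at h1
  simp only [Finset.prod_const, Finset.card_univ, Fintype.card_fin] at h1
  rw [← ofAdd_nsmul, ← ofAdd_nsmul, ← ofAdd_nsmul, ← ofAdd_add] at h1
  simpa using Multiplicative.ofAdd.injective h1

lemma card_tau_compl (A B S : Finset ℕ) (h : S ⊆ A) : (tau A B S)ᶜ.card = A.card - S.card := by
  rw [Finset.card_compl, card_tau A B S h]
  simp only [Fintype.card_sum, Fintype.card_fin]
  omega

lemma exists_idx (A : Finset ℕ) {x : ℕ} (h : x ∈ A) : ∃ k, A.orderEmbOfFin rfl k = x := by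
  have : x ∈ Set.range (A.orderEmbOfFin rfl) := by
    rw [Finset.range_orderEmbOfFin]; exact h
  exact this

lemma lab_inj_tau (A B S : Finset ℕ) (h : S ⊆ A \ B) :
    ∀ x ∈ tau A B S, ∀ y ∈ tau A B S, lab A B x = lab A B y → x = y := by
  have key : ∀ (k : Fin B.card) (l : Fin A.card), A.orderEmbOfFin rfl l ∈ S →
      B.orderEmbOfFin rfl k ≠ A.orderEmbOfFin rfl l := by
    intro k l hl he
    have h1 := h hl
    rw [Finset.mem_sdiff, ← he] at h1
    exact h1.2 (Finset.orderEmbOfFin_mem _ _ _)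
  rintro (k | k) hx (l | l) hy he
  · simp [lab] at he; rw [he]
  · simp [mem_tau_inl, mem_tau_inr, lab] at he hy; exact absurd he (key _ _ hy)
  · simp [mem_tau_inl, mem_tau_inr, lab] at he hx; exact absurd he.symm (key _ _ hx)
  · simp [lab] at he; rw [he]

lemma gAB_eq (A B : Finset ℕ) : gAB K A B =
    PFT Finset.univ (pos A B) (fun x y => UssP K (lab A B x) (lab A B y) +
      if x.isRight = true ∧ y.isRight = true then - UssP K (lab A B x) (lab A B y) else 0) := by
  unfold gAB
  refine pf_eq _ _ _ finSumFinEquiv.symm ?_ ?_ _ ?_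
  · intro x; simp only [Finset.mem_univ, true_iff]; exact ⟨finSumFinEquiv x, by simp⟩
  · intro k l; simp [pos]
  · intro k l
    simp only [Matrix.submatrix_apply, Matrix.of_apply]
    generalize finSumFinEquiv.symm k = x
    generalize finSumFinEquiv.symm l = y
    rcases x with x | x <;> rcases y with y | y <;> simp [lab]

lemma pfU_eq {ι : Type*} [Fintype ι] [DecidableEq ι] (T : Finset ι) (p L : ι → ℕ) (C : Finset ℕ)
    (h1 : ∀ c ∈ C, ∃ x ∈ T, L x = c) (h2 : ∀ x ∈ T, L x ∈ C)
    (h3 : ∀ x ∈ T, ∀ y ∈ T, L x = L y → x = y)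
    (h4 : ∀ x ∈ T, ∀ y ∈ T, p x < p y ↔ L x < L y) :
    PFT T p (fun x y => UssP K (L x) (L y)) = pfUssP K C := by
  have : ∀ k : Fin C.card, ∃ x ∈ T, L x = C.orderEmbOfFin rfl k :=
    fun k => h1 _ (Finset.orderEmbOfFin_mem _ _ _)
  choose e he1 he2 using this
  symm
  unfold pfUssP
  refine pf_eq _ _ _ e ?_ ?_ _ ?_
  · intro x
    constructor
    · intro hx
      obtain ⟨k, hk⟩ := exists_idx C (h2 x hx)
      exact ⟨k, h3 _ (he1 k) _ hx (by rw [he2, hk])⟩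
    · rintro ⟨k, rfl⟩; exact he1 k
  · intro k l
    rw [h4 _ (he1 k) _ (he1 l), he2, he2]; simp
  · intro k l; simp [he2]

lemma sign_one (A B S : Finset ℕ) (h : S ⊆ A) (hev : Even (A.card - S.card)) :
    ∏ x ∈ tau A B S, ∏ y ∈ (tau A B S)ᶜ, sE K (pos A B x < pos A B y) =
      (-1) ^ setSgnExp A S := by
  rw [setSgn_eq A S h, prod_tau, prodA A S h]
  have h1 : ∀ k : Fin B.card, ∏ y ∈ (tau A B S)ᶜ, sE K (pos A B (Sum.inl k) < pos A B y) = 1 := by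
    intro k
    rw [← card_tau_compl A B S h] at hev
    rw [← hev.neg_one_pow, ← Finset.prod_const]
    refine Finset.prod_congr rfl fun y hy => ?_
    rcases y with y | y
    · simp [mem_tau_inl, mem_tau_inr] at hy
    · rw [pos_inl, pos_inr]; unfold sE; rw [if_pos]; omega
  simp only [h1, Finset.prod_const_one, one_mul]
  refine Finset.prod_congr rfl fun k _ => ?_
  rw [prod_tau_compl, prodA A (A \ S) Finset.sdiff_subset]
  simp only [pos_inr, OrderEmbedding.lt_iff_lt, add_lt_add_iff_left, Fin.val_fin_lt]

lemma sign_two (A B S : Finset ℕ) (h : S ⊆ A \ B) :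
    ∏ x ∈ tau A B S, ∏ y ∈ tau A B S,
      sE K (lab A B x < lab A B y ∧ pos A B y < pos A B x) =
      (-1) ^ setSgnExp (B ∪ S) S := by
  have hSA : S ⊆ A := h.trans Finset.sdiff_subset
  have hBS : (B ∪ S) \ S = B := by
    rw [Finset.union_sdiff_right, Finset.sdiff_eq_self_iff_disjoint]
    rw [Finset.disjoint_left]
    intro x hx hx'
    exact (Finset.mem_sdiff.1 (h hx')).2 hx
  rw [setSgn_eq (B ∪ S) S Finset.subset_union_right, hBS, prod_tau, prodA A S hSA]
  have hf : ∀ P : Prop, ∀ [Decidable P], ¬ P → sE K P = 1 := by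
    intro P _ hP; simp [sE, hP]
  have h1 : ∀ k : Fin B.card, ∏ y ∈ tau A B S,
      sE K (lab A B (Sum.inl k) < lab A B y ∧ pos A B y < pos A B (Sum.inl k)) = 1 := by
    intro k
    refine Finset.prod_eq_one fun y _ => hf _ ?_
    rcases y with y | y
    · simp only [lab, Sum.elim_inl, pos_inl, OrderEmbedding.lt_iff_lt, Fin.val_fin_lt]
      intro h; exact lt_asymm h.1 h.2
    · rw [pos_inl, pos_inr]; omega
  simp only [h1, Finset.prod_const_one, one_mul]
  refine Finset.prod_congr rfl fun k _ => ?_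
  congr 1
  rw [prod_tau, prodA B B (Finset.Subset.refl _)]
  rw [Finset.prod_eq_one (s := (Finset.univ : Finset (Fin A.card))), mul_one]
  · refine Finset.prod_congr rfl fun l _ => ?_
    rw [if_pos (Finset.orderEmbOfFin_mem _ _ _)]
    have : pos A B (Sum.inl l) < pos A B (Sum.inr k) := by rw [pos_inl, pos_inr]; omega
    simp only [this, and_true, lab, Sum.elim_inl, Sum.elim_inr]
  · intro l _
    rw [hf, ite_self]
    simp only [lab, Sum.elim_inr, pos_inr, OrderEmbedding.lt_iff_lt, add_lt_add_iff_left,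
      Fin.val_fin_lt]
    intro h; exact lt_asymm h.1 h.2

end Helpers7

/-- For finite sets `A`, `B` of positive integers with `|A| ≤ |B|`,
the Pfaffian `g_{AB}` expands as
`∑_S (-1)^{(|A|-|S|)/2} ⟨A,S⟩ ⟨B ⊔ S, S⟩ pf(U^ss_{A∖S,A∖S}) pf(U^ss_{B⊔S,B⊔S})`,
the sum being over subsets `S ⊆ A ∖ B` with `|B| + |S|` and `|A| - |S|` both even. -/
theorem statement19 (K : Type*) [Field K] (A B : Finset ℕ)
    (hA : ∀ a ∈ A, 1 ≤ a) (hB : ∀ b ∈ B, 1 ≤ b) (hAB : A.card ≤ B.card) :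
    gAB K A B =
      ∑ S ∈ (A \ B).powerset.filter
          (fun S => Even (B.card + S.card) ∧ Even (A.card - S.card)),
        (-1 : MvPolynomial PVar K) ^ ((A.card - S.card) / 2) *
          (-1 : MvPolynomial PVar K) ^ setSgnExp A S *
          (-1 : MvPolynomial PVar K) ^ setSgnExp (B ∪ S) S *
          pfUssP K (A \ S) * pfUssP K (B ∪ S) := by
  rw [gAB_eq, PFT_add (pos_inj A B)]
  have hpos : ∀ T : Finset (Fin B.card ⊕ Fin A.card),
      ∀ x ∈ T, ∀ y ∈ T, pos A B x = pos A B y → x = y := fun T x _ y _ h => pos_inj A B h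
  symm
  refine Finset.sum_of_injOn (tau A B) ?_ ?_ ?_ ?_
  · have key : ∀ S S' : Finset ℕ, S ⊆ A \ B → tau A B S = tau A B S' → S ⊆ S' := by
      intro S S' hS h x hx
      obtain ⟨k, hk⟩ := exists_idx A (Finset.mem_sdiff.1 (hS hx)).1
      have h1 : (Sum.inr k : Fin B.card ⊕ Fin A.card) ∈ tau A B S := by
        simp [mem_tau_inl, mem_tau_inr, lab, hk, hx]
      rw [h] at h1
      simpa [mem_tau_inl, mem_tau_inr, lab, hk] using h1
    intro S hS S' hS' h
    simp only [Finset.coe_filter, Finset.mem_powerset, Set.mem_ofPred_eq] at hS hS'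
    exact Finset.Subset.antisymm (key _ _ hS.1 h) (key _ _ hS'.1 h.symm)
  · intro S _; simp
  · intro T _ hT
    by_cases hleft : ∀ k, (Sum.inl k : Fin B.card ⊕ Fin A.card) ∈ T
    swap
    · push Not at hleft
      obtain ⟨k, hk⟩ := hleft
      rw [PFT_zero_row (T := Tᶜ) _ (Sum.inl k) (by simpa using hk) (by simp) (by simp) (hpos _),
        mul_zero]
    by_cases hodd : Even T.card
    swap
    · rw [PFT_odd (T := T) (hpos _) _ hodd]; simp
    by_cases hodd' : Even Tᶜ.card
    swap
    · rw [PFT_odd (T := Tᶜ) (hpos _) _ hodd']; simp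
    by_cases hdup : ∃ k l, (Sum.inr k : Fin B.card ⊕ Fin A.card) ∈ T ∧
        A.orderEmbOfFin rfl k = B.orderEmbOfFin rfl l
    · obtain ⟨k, l, hk, hkl⟩ := hdup
      rw [PFT_eq_rows (T := T) (hpos _) _ (fun x y => UssP_skew _ _) (fun x => UssP_self _)
        (Sum.inr k) (Sum.inl l) hk (hleft l) (by simp) (fun w => by simp [lab, hkl])]
      simp
    exfalso
    apply hT
    let S : Finset ℕ := (Finset.univ.filter fun k : Fin A.card =>
      (Sum.inr k : Fin B.card ⊕ Fin A.card) ∈ T).image (fun k => A.orderEmbOfFin rfl k)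
    have hSA : S ⊆ A := by
      intro x hx
      simp only [S, Finset.mem_image] at hx
      obtain ⟨k, _, rfl⟩ := hx
      exact Finset.orderEmbOfFin_mem _ _ _
    have hS : S ⊆ A \ B := by
      intro x hx
      rw [Finset.mem_sdiff]
      refine ⟨hSA hx, fun hxB => hdup ?_⟩
      simp only [S, Finset.mem_image, Finset.mem_filter, Finset.mem_univ, true_and] at hx
      obtain ⟨k, hk, rfl⟩ := hx
      obtain ⟨l, hl⟩ := exists_idx B hxB
      exact ⟨k, l, hk, hl.symm⟩
    have hTS : tau A B S = T := by
      ext x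
      rcases x with x | x
      · simp [mem_tau_inl, mem_tau_inr, hleft]
      · simp [mem_tau_inl, mem_tau_inr, lab, S]
    refine ⟨S, ?_, hTS⟩
    simp only [Finset.coe_filter, Finset.mem_powerset, Set.mem_ofPred_eq]
    rw [← card_tau A B S hSA, ← card_tau_compl A B S hSA, hTS]
    exact ⟨hS, hodd, hodd'⟩
  · intro S hS
    simp only [Finset.mem_filter, Finset.mem_powerset] at hS
    obtain ⟨hS, he1, he2⟩ := hS
    have hSA : S ⊆ A := hS.trans Finset.sdiff_subset
    have hlab := lab_inj_tau A B S hS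
    rw [sign_one A B S hSA he2, PFT_change hlab (hpos _) _ (fun x y => UssP_skew _ _),
      sign_two A B S hS,
      PFT_neg (T := (tau A B S)ᶜ) (hpos _) (fun x y => UssP K (lab A B x) (lab A B y)) _ ?_,
      card_tau_compl A B S hSA,
      pfU_eq (tau A B S) (lab A B) (lab A B) (B ∪ S) ?_ ?_ hlab (fun _ _ _ _ => Iff.rfl),
      pfU_eq (tau A B S)ᶜ (pos A B) (lab A B) (A \ S) ?_ ?_ ?_ ?_]
    · ring
    · intro c hc
      rw [Finset.mem_sdiff] at hc
      obtain ⟨k, hk⟩ := exists_idx A hc.1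
      exact ⟨Sum.inr k, by simp [mem_tau_inl, mem_tau_inr, lab, hk, hc.2], by simp [lab, hk]⟩
    · rintro (k | k) hx
      · simp [mem_tau_inl, mem_tau_inr] at hx
      · simpa [mem_tau_inl, mem_tau_inr, lab] using hx
    · rintro (k | k) hx (l | l) hy h
      · simp [mem_tau_inl, mem_tau_inr] at hx
      · simp [mem_tau_inl, mem_tau_inr] at hx
      · simp [mem_tau_inl, mem_tau_inr] at hy
      · simp [lab] at h; rw [h]
    · rintro (k | k) hx (l | l) hy
      · simp [mem_tau_inl, mem_tau_inr] at hx
      · simp [mem_tau_inl, mem_tau_inr] at hx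
      · simp [mem_tau_inl, mem_tau_inr] at hy
      · simp [lab, pos_inr]
    · intro c hc
      rcases Finset.mem_union.1 hc with hc | hc
      · obtain ⟨k, hk⟩ := exists_idx B hc
        exact ⟨Sum.inl k, by simp [mem_tau_inl, mem_tau_inr], by simp [lab, hk]⟩
      · obtain ⟨k, hk⟩ := exists_idx A (hSA hc)
        exact ⟨Sum.inr k, by simp [mem_tau_inl, mem_tau_inr, lab, hk, hc], by simp [lab, hk]⟩
    · rintro (k | k) hx
      · simp [lab]
      · simp [mem_tau_inl, mem_tau_inr, lab] at hx
        simp [lab, hx]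
    · rintro (k | k) hx (l | l) hy
      · simp [mem_tau_inl, mem_tau_inr] at hx
      · simp [mem_tau_inl, mem_tau_inr] at hx
      · simp [mem_tau_inl, mem_tau_inr] at hy
      · simp

end Paper
end
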